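/- Let u be a monotone traveling wave solution of the balanced Allen-Cahn equation in the plane. Then the function ρ(y) := ∫_ℝ [ ½((∂u/∂x(x,y))² − (∂u/∂y(x,y))²) + F(u(x,y)) ] dx is finite for every y ∈ ℝ, and the Hamiltonian identity ρ(y) − ρ(y₀) = c ∫_{y₀}^{y} ∫_ℝ (∂u/∂y(x,t))² dx dt holds for all y₀, y ∈ ℝ. -/

import Mathlib

open Real Filter MeasureTheory Metric

noncomputable def pdx (u : ℝ → ℝ → ℝ) (x y : ℝ) : ℝ := deriv (fun t => u t y) x

noncomputable def pdy (u : ℝ → ℝ → ℝ) (x y : ℝ) : ℝ := deriv (fun t => u x t) y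

noncomputable def pdxx (u : ℝ → ℝ → ℝ) (x y : ℝ) : ℝ := deriv (fun t => pdx u t y) x

noncomputable def pdyy (u : ℝ → ℝ → ℝ) (x y : ℝ) : ℝ := deriv (fun t => pdy u x t) y

/-- `F` is a balanced double-well potential. -/
def BalancedDoubleWell (F : ℝ → ℝ) : Prop :=
  ContDiff ℝ 3 F ∧ deriv F (-1) = 0 ∧ deriv F 1 = 0 ∧
  0 < deriv (deriv F) (-1) ∧ 0 < deriv (deriv F) 1 ∧
  (∀ s ∈ Set.Ioo (-1 : ℝ) 0, 0 < deriv F s) ∧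
  (∀ s ∈ Set.Ioo (0 : ℝ) 1, deriv F s < 0) ∧
  F (-1) = 0 ∧ F 1 = 0

/-- `u` is a `C³` solution of `Δu + c uᵧ = F'(u)` on `ℝ²` with `|u| ≤ 1`
which is monotone in `y`. -/
def IsSolution (F : ℝ → ℝ) (c : ℝ) (u : ℝ → ℝ → ℝ) : Prop :=
  ContDiff ℝ 3 (fun p : ℝ × ℝ => u p.1 p.2) ∧
  (∀ x y : ℝ, pdxx u x y + pdyy u x y + c * pdy u x y = deriv F (u x y)) ∧
  (∀ x y : ℝ, |u x y| ≤ 1) ∧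
  (∀ x y : ℝ, 0 < pdy u x y)

/-- A monotone traveling wave solution connecting `-1` to `1`. -/
def IsTravelingWave (F : ℝ → ℝ) (c : ℝ) (u : ℝ → ℝ → ℝ) : Prop :=
  IsSolution F c u ∧
  (∀ x : ℝ, Tendsto (fun y => u x y) atTop (nhds 1)) ∧
  (∀ x : ℝ, Tendsto (fun y => u x y) atBot (nhds (-1)))

/-!
Test the equation with `uᵧ` on the strip `[y₀, y] × ℝ` against a cutoff `φ = φ_S` in `x` equal to
`1` on `[-S, S]`: with `h = ½ (uₓ² - uᵧ²) + F(u)` and `e = h + uᵧ²` this gives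
`(∫ φ h)' = c ∫ φ uᵧ² - ∫ φ' uₓ uᵧ`, and the identity follows as `S → ∞` once `∫ e dx` is bounded
uniformly in `y`, because `|uₓ uᵧ| ≤ e` and `|φ'| = O(1 / S)`.

To bound `∫ e dx`, first note that `uₓ` is bounded (a maximum principle argument for the difference
of two reflected translates of `u`), so by monotonicity the flux `∫∫ φ' uₓ uᵧ` is bounded
independently of the height of the strip and, since `∫ |φ'|` is scale invariant, of `S`. Next,
`4e = (Δ + c ∂_y) (u - σ)² + 4 F(u) - 2 (u - σ) F'(u)` for every constant `σ`. As `u`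
tends to a zero `σ` of `F` at each end, integrating this against `φ` shows that `∫ φ e` becomes
small along a sequence of heights tending to each end: otherwise the bounded function
`∫ φ (u - σ)²` would be uniformly convex up to drift. Hence the total dissipation `c ∫∫ φ uᵧ²`,
and with it `∫ φ h`, is bounded uniformly in `S`. Finally `uᵧ` solves the linearized
equation, which upgrades the bound on `∫∫ φ uᵧ²` to one on `∫ φ uᵧ²` at every height.
-/

section PartialDerivatives

variable {f : ℝ → ℝ → ℝ}

lemma pdx_eq_fderiv (hf : Differentiable ℝ ↿f) (x y : ℝ) :
    pdx f x y = fderiv ℝ ↿f (x, y) (1, 0) := by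
  have h : HasDerivAt (fun t => (t, y)) (1, 0) x :=
    (hasDerivAt_id x).prodMk (hasDerivAt_const x y)
  exact ((hf (x, y)).hasFDerivAt.comp_hasDerivAt x h).deriv

lemma pdy_eq_fderiv (hf : Differentiable ℝ ↿f) (x y : ℝ) :
    pdy f x y = fderiv ℝ ↿f (x, y) (0, 1) := by
  have h : HasDerivAt (fun t => (x, t)) (0, 1) y :=
    (hasDerivAt_const y x).prodMk (hasDerivAt_id y)
  exact ((hf (x, y)).hasFDerivAt.comp_hasDerivAt y h).deriv

lemma hasDerivAt_pdx (hf : Differentiable ℝ ↿f) (x y : ℝ) :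
    HasDerivAt (fun t => f t y) (pdx f x y) x :=
  (hf.comp (by fun_prop : Differentiable ℝ fun t : ℝ => (t, y))).differentiableAt.hasDerivAt

lemma hasDerivAt_pdy (hf : Differentiable ℝ ↿f) (x y : ℝ) :
    HasDerivAt (fun t => f x t) (pdy f x y) y :=
  (hf.comp (by fun_prop : Differentiable ℝ fun t : ℝ => (x, t))).differentiableAt.hasDerivAt

variable {m n : WithTop ℕ∞}

lemma contDiff_pdx (hf : ContDiff ℝ n ↿f) (hmn : m + 1 ≤ n) : ContDiff ℝ m ↿(pdx f) := by
  have hd : Differentiable ℝ ↿f := (hf.of_le (le_add_self.trans hmn)).differentiable one_ne_zero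
  have h : ↿(pdx f) = fun p => fderiv ℝ ↿f p (1, 0) := funext fun p => pdx_eq_fderiv hd p.1 p.2
  rw [h]
  exact (hf.fderiv_right hmn).clm_apply contDiff_const

lemma contDiff_pdy (hf : ContDiff ℝ n ↿f) (hmn : m + 1 ≤ n) : ContDiff ℝ m ↿(pdy f) := by
  have hd : Differentiable ℝ ↿f := (hf.of_le (le_add_self.trans hmn)).differentiable one_ne_zero
  have h : ↿(pdy f) = fun p => fderiv ℝ ↿f p (0, 1) := funext fun p => pdy_eq_fderiv hd p.1 p.2
  rw [h]
  exact (hf.fderiv_right hmn).clm_apply contDiff_const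

lemma contDiff_pdxx (hf : ContDiff ℝ n ↿f) (hmn : m + 2 ≤ n) : ContDiff ℝ m ↿(pdxx f) :=
  contDiff_pdx (contDiff_pdx (m := m + 1) hf (by rwa [add_assoc, one_add_one_eq_two])) le_rfl

lemma contDiff_pdyy (hf : ContDiff ℝ n ↿f) (hmn : m + 2 ≤ n) : ContDiff ℝ m ↿(pdyy f) :=
  contDiff_pdy (contDiff_pdy (m := m + 1) hf (by rwa [add_assoc, one_add_one_eq_two])) le_rfl

lemma pdy_pdx_comm (hf : ContDiff ℝ 2 ↿f) (x y : ℝ) : pdy (pdx f) x y = pdx (pdy f) x y := by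
  have hd : Differentiable ℝ ↿f := hf.differentiable two_ne_zero
  have hd' : Differentiable ℝ (fderiv ℝ ↿f) :=
    (hf.fderiv_right (m := 1) one_add_one_eq_two.le).differentiable one_ne_zero
  have second (v w : ℝ × ℝ) : fderiv ℝ (fun p => fderiv ℝ ↿f p v) (x, y) w =
      fderiv ℝ (fderiv ℝ ↿f) (x, y) w v := by
    rw [fderiv_clm_apply (hd' _) (differentiableAt_const _)]
    simp
  have hx : ↿(pdx f) = fun p => fderiv ℝ ↿f p (1, 0) := funext fun p => pdx_eq_fderiv hd p.1 p.2
  have hy : ↿(pdy f) = fun p => fderiv ℝ ↿f p (0, 1) := funext fun p => pdy_eq_fderiv hd p.1 p.2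
  rw [pdy_eq_fderiv ((contDiff_pdx hf one_add_one_eq_two.le).differentiable one_ne_zero),
    pdx_eq_fderiv ((contDiff_pdy hf one_add_one_eq_two.le).differentiable one_ne_zero),
    hx, hy, second, second]
  exact hf.contDiffAt.isSymmSndFDerivAt (by simp) _ _

end PartialDerivatives

section SecondOrderInequalities

lemma tendsto_atTop_of_eventually_le_deriv {f f' : ℝ → ℝ} {ε : ℝ}
    (hf : ∀ y, HasDerivAt f (f' y) y) (hε : 0 < ε) (h : ∀ᶠ y in atTop, ε ≤ f' y) :
    Tendsto f atTop atTop := by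
  obtain ⟨a, ha⟩ := eventually_atTop.1 h
  have hline : Tendsto (fun y => ε * (y - a) + f a) atTop atTop :=
    tendsto_atTop_add_const_right _ _
      ((tendsto_atTop_add_const_right _ (-a) tendsto_id).const_mul_atTop hε)
  refine tendsto_atTop_mono' _ ?_ hline
  filter_upwards [eventually_ge_atTop a] with y hy
  have := (convex_Ici a).mul_sub_le_image_sub_of_le_deriv
    (fun y _ => (hf y).continuousAt.continuousWithinAt)
    (fun y _ => (hf y).differentiableAt.differentiableWithinAt)
    (fun y hy => (hf y).deriv ▸ ha y (interior_subset hy)) a Set.self_mem_Ici y hy hy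
  linarith

variable {W W' W'' h : ℝ → ℝ} {c A B ε : ℝ}

lemma frequently_atTop_lt_of_bounded (hW : ∀ y, HasDerivAt W (W' y) y)
    (hW' : ∀ y, HasDerivAt W' (W'' y) y) (hB : ∀ y, |W y| ≤ B) (hε : 0 < ε) :
    ∃ᶠ y in atTop, W'' y + c * W' y < ε := by
  intro hev
  have hsum : Tendsto (fun y => W' y + c * W y) atTop atTop :=
    tendsto_atTop_of_eventually_le_deriv (fun y => (hW' y).add ((hW y).const_mul c)) hε
      (hev.mono fun y => le_of_not_gt)
  have hbound (y : ℝ) : -(c * W y) ≥ -(|c| * B) :=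
    neg_le_neg ((le_abs_self _).trans (by rw [abs_mul]; gcongr; exact hB y))
  have hW'_top : Tendsto W' atTop atTop :=
    (tendsto_atTop_add_right_of_le _ _ hsum hbound).congr fun y => by ring
  have hW_top : Tendsto W atTop atTop :=
    tendsto_atTop_of_eventually_le_deriv hW one_pos (hW'_top.eventually_ge_atTop 1)
  obtain ⟨y, hy⟩ := (hW_top.eventually_gt_atTop B).exists
  exact hy.not_ge ((le_abs_self _).trans (hB y))

lemma frequently_atBot_lt_of_bounded (hW : ∀ y, HasDerivAt W (W' y) y)
    (hW' : ∀ y, HasDerivAt W' (W'' y) y) (hB : ∀ y, |W y| ≤ B) (hε : 0 < ε) :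
    ∃ᶠ y in atBot, W'' y + c * W' y < ε := by
  have hV (y : ℝ) : HasDerivAt (fun y => W (-y)) (-W' (-y)) y :=
    ((hW (-y)).comp y (hasDerivAt_neg y)).congr_deriv (by ring)
  have hV' (y : ℝ) : HasDerivAt (fun y => -W' (-y)) (W'' (-y)) y :=
    ((hW' (-y)).comp y (hasDerivAt_neg y)).neg.congr_deriv (by ring)
  have hfreq : ∃ᶠ y in atTop, W'' (-y) + c * W' (-y) < ε := by
    simpa using frequently_atTop_lt_of_bounded (c := -c) hV hV' (fun y => hB (-y)) hε
  exact tendsto_neg_atTop_atBot.frequently hfreq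

lemma exists_mem_Icc_eq_integral (hW : Continuous W) (a : ℝ) :
    ∃ t ∈ Set.Icc a (a + 1), W t = ∫ y in a..(a + 1), W y := by
  obtain ⟨t, ht, h⟩ := exists_eq_const_mul_intervalIntegral_of_nonneg (a := a) (b := a + 1)
    (μ := volume) (g := fun _ => 1) hW.continuousOn intervalIntegrable_const (by simp)
  exact ⟨t, by simpa using ht, by simpa using h.symm⟩

lemma sub_le_of_neg_le_deriv_of_integral_le {P P' : ℝ → ℝ} {a b : ℝ}
    (hP : ∀ y, HasDerivAt P (P' y) y) (hh : Continuous h) (hhB : ∫ y in a..b, h y ≤ B)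
    (hle : ∀ y, -h y ≤ P' y) (hab : a ≤ b) : P a - B ≤ P b := by
  have hmono : Monotone fun y => P y + ∫ s in a..y, h s :=
    monotone_of_hasDerivAt_nonneg
      (fun y => (hP y).add (hh.integral_hasStrictDerivAt a y).hasDerivAt)
      (fun y => neg_le_iff_add_nonneg.1 (hle y))
  have := hmono hab
  simp only [intervalIntegral.integral_same] at this
  linarith

lemma integral_deriv_add_mul (hW : ∀ y, HasDerivAt W (W' y) y) (hW' : Continuous W')
    (c a b : ℝ) : ∫ y in a..b, (W' y + c * W y) = (W b - W a) + c * ∫ y in a..b, W y := by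
  have hWc : Continuous W := continuous_iff_continuousAt.2 fun y => (hW y).continuousAt
  rw [intervalIntegral.integral_add (hW'.intervalIntegrable _ _)
    ((hWc.intervalIntegrable _ _).const_mul c), intervalIntegral.integral_const_mul,
    intervalIntegral.integral_eq_sub_of_hasDerivAt (fun y _ => hW y)
      (hW'.intervalIntegrable _ _)]

lemma deriv_add_mul_le_of_integral_le
    (hW : ∀ y, HasDerivAt W (W' y) y) (hW' : ∀ y, HasDerivAt W' (W'' y) y) (hW0 : ∀ y, 0 ≤ W y)
    (hWA : ∀ a b, a ≤ b → ∫ y in a..b, W y ≤ A) (hh : Continuous h)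
    (hhB : ∀ a b, a ≤ b → ∫ y in a..b, h y ≤ B) (hle : ∀ y, -h y ≤ W'' y + c * W' y) (y : ℝ) :
    W' y + c * W y ≤ A + |c| * A + B := by
  have hWc : Continuous W := continuous_iff_continuousAt.2 fun y => (hW y).continuousAt
  have hW'c : Continuous W' := continuous_iff_continuousAt.2 fun y => (hW' y).continuousAt
  obtain ⟨t, ht, hWt⟩ := exists_mem_Icc_eq_integral hWc (y + 1)
  have hyt : y + 1 ≤ t := ht.1
  have hlow (s : ℝ) (hs : y ≤ s) : W' y + c * W y - B ≤ W' s + c * W s :=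
    sub_le_of_neg_le_deriv_of_integral_le (fun y => (hW' y).add ((hW y).const_mul c)) hh
      (hhB y s hs) hle hs
  have hint : (t - y) * (W' y + c * W y - B) ≤ (W t - W y) + c * ∫ s in y..t, W s := by
    rw [← integral_deriv_add_mul hW hW'c, ← smul_eq_mul, ← intervalIntegral.integral_const]
    exact intervalIntegral.integral_mono_on (by linarith) intervalIntegrable_const
      ((hW'c.add (hWc.const_mul c)).intervalIntegrable y t) fun s hs => hlow s hs.1
  have hcW : c * ∫ s in y..t, W s ≤ |c| * A :=
    mul_le_mul (le_abs_self c) (hWA y t (by linarith))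
      (intervalIntegral.integral_nonneg (by linarith) fun s _ => hW0 s) (abs_nonneg c)
  have hA : 0 ≤ A := by simpa using hWA 0 0 le_rfl
  have : 0 ≤ |c| * A := by positivity
  have hWt_le : W t ≤ A := hWt ▸ hWA _ _ (by linarith)
  by_contra! hlt
  nlinarith [hW0 y]

lemma le_of_integral_le_of_neg_le
    (hW : ∀ y, HasDerivAt W (W' y) y) (hW' : ∀ y, HasDerivAt W' (W'' y) y) (hW0 : ∀ y, 0 ≤ W y)
    (hWA : ∀ a b, a ≤ b → ∫ y in a..b, W y ≤ A) (hh : Continuous h)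
    (hhB : ∀ a b, a ≤ b → ∫ y in a..b, h y ≤ B) (hle : ∀ y, -h y ≤ W'' y + c * W' y) (y : ℝ) :
    W y ≤ 2 * (A + |c| * A) + B := by
  have hWc : Continuous W := continuous_iff_continuousAt.2 fun y => (hW y).continuousAt
  have hW'c : Continuous W' := continuous_iff_continuousAt.2 fun y => (hW' y).continuousAt
  obtain ⟨t, ht, hWt⟩ := exists_mem_Icc_eq_integral hWc (y - 1)
  have hty : t ≤ y := by linarith [ht.2]
  have hup := deriv_add_mul_le_of_integral_le hW hW' hW0 hWA hh hhB hle
  have hint : (W y - W t) + c * ∫ s in t..y, W s ≤ (y - t) * (A + |c| * A + B) := by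
    rw [← integral_deriv_add_mul hW hW'c, ← smul_eq_mul, ← intervalIntegral.integral_const]
    exact intervalIntegral.integral_mono_on hty
      ((hW'c.add (hWc.const_mul c)).intervalIntegrable t y) intervalIntegrable_const
      fun s _ => hup s
  have hcW : -c * ∫ s in t..y, W s ≤ |c| * A :=
    mul_le_mul (neg_le_abs c) (hWA t y hty)
      (intervalIntegral.integral_nonneg hty fun s _ => hW0 s) (abs_nonneg c)
  have hA : 0 ≤ A := by simpa using hWA 0 0 le_rfl
  have hB : 0 ≤ B := by simpa using hhB 0 0 le_rfl
  have : 0 ≤ |c| * A := by positivity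
  have hWt_le : W t ≤ A := hWt ▸ hWA _ _ (by linarith)
  have hlen : (y - t) * (A + |c| * A + B) ≤ 1 * (A + |c| * A + B) := by
    gcongr
    linarith [ht.1]
  linarith

end SecondOrderInequalities

/-- The operator `Δ + c ∂_y` of the traveling wave equation. -/
noncomputable def driftLaplacian (c : ℝ) (w : ℝ → ℝ → ℝ) (x y : ℝ) : ℝ :=
  pdxx w x y + pdyy w x y + c * pdy w x y

section DriftLaplacian

variable {w v : ℝ → ℝ → ℝ} {c : ℝ}

lemma continuous_driftLaplacian (hw : ContDiff ℝ 2 ↿w) : Continuous ↿(driftLaplacian c w) :=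
  ((contDiff_pdxx (m := 0) hw (zero_add 2).le).continuous.add
    (contDiff_pdyy (m := 0) hw (zero_add 2).le).continuous).add
    ((contDiff_pdy hw one_add_one_eq_two.le).continuous.const_mul c)

lemma driftLaplacian_neg (w : ℝ → ℝ → ℝ) (x y : ℝ) :
    driftLaplacian c (fun x y => -w x y) x y = -driftLaplacian c w x y := by
  simp only [driftLaplacian, pdxx, pdyy, pdx, pdy, deriv.fun_neg]
  ring

lemma driftLaplacian_sub (hw : ContDiff ℝ 2 ↿w) (hv : ContDiff ℝ 2 ↿v) (x y : ℝ) :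
    driftLaplacian c (fun x y => w x y - v x y) x y =
      driftLaplacian c w x y - driftLaplacian c v x y := by
  have hx (x y : ℝ) : pdx (fun x y => w x y - v x y) x y = pdx w x y - pdx v x y :=
    ((hasDerivAt_pdx (hw.differentiable two_ne_zero) x y).sub
      (hasDerivAt_pdx (hv.differentiable two_ne_zero) x y)).deriv
  have hy (x y : ℝ) : pdy (fun x y => w x y - v x y) x y = pdy w x y - pdy v x y :=
    ((hasDerivAt_pdy (hw.differentiable two_ne_zero) x y).sub
      (hasDerivAt_pdy (hv.differentiable two_ne_zero) x y)).deriv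
  have hx₁ {f : ℝ → ℝ → ℝ} (hf : ContDiff ℝ 2 ↿f) : Differentiable ℝ ↿(pdx f) :=
    (contDiff_pdx hf one_add_one_eq_two.le).differentiable one_ne_zero
  have hy₁ {f : ℝ → ℝ → ℝ} (hf : ContDiff ℝ 2 ↿f) : Differentiable ℝ ↿(pdy f) :=
    (contDiff_pdy hf one_add_one_eq_two.le).differentiable one_ne_zero
  have hxx : pdxx (fun x y => w x y - v x y) x y = pdxx w x y - pdxx v x y := by
    simp only [pdxx, hx]
    exact ((hasDerivAt_pdx (hx₁ hw) x y).sub (hasDerivAt_pdx (hx₁ hv) x y)).deriv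
  have hyy : pdyy (fun x y => w x y - v x y) x y = pdyy w x y - pdyy v x y := by
    simp only [pdyy, hy]
    exact ((hasDerivAt_pdy (hy₁ hw) x y).sub (hasDerivAt_pdy (hy₁ hv) x y)).deriv
  simp only [driftLaplacian, hxx, hyy, hy]
  ring

lemma driftLaplacian_sq (hw : ContDiff ℝ 2 ↿w) (x y : ℝ) :
    driftLaplacian c (fun x y => w x y ^ 2) x y =
      2 * (pdx w x y ^ 2 + pdy w x y ^ 2) + 2 * w x y * driftLaplacian c w x y := by
  have hd : Differentiable ℝ ↿w := hw.differentiable two_ne_zero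
  have hx₁ : Differentiable ℝ ↿(pdx w) :=
    (contDiff_pdx hw one_add_one_eq_two.le).differentiable one_ne_zero
  have hy₁ : Differentiable ℝ ↿(pdy w) :=
    (contDiff_pdy hw one_add_one_eq_two.le).differentiable one_ne_zero
  have hx (x y : ℝ) : pdx (fun x y => w x y ^ 2) x y = 2 * w x y * pdx w x y :=
    ((hasDerivAt_pdx hd x y).pow 2).deriv.trans (by norm_num)
  have hy (x y : ℝ) : pdy (fun x y => w x y ^ 2) x y = 2 * w x y * pdy w x y :=
    ((hasDerivAt_pdy hd x y).pow 2).deriv.trans (by norm_num)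
  have hxx : pdxx (fun x y => w x y ^ 2) x y =
      2 * pdx w x y * pdx w x y + 2 * w x y * pdxx w x y := by
    simp only [pdxx, hx]
    exact (((hasDerivAt_pdx hd x y).const_mul 2).mul (hasDerivAt_pdx hx₁ x y)).deriv
  have hyy : pdyy (fun x y => w x y ^ 2) x y =
      2 * pdy w x y * pdy w x y + 2 * w x y * pdyy w x y := by
    simp only [pdyy, hy]
    exact (((hasDerivAt_pdy hd x y).const_mul 2).mul (hasDerivAt_pdy hy₁ x y)).deriv
  simp only [driftLaplacian, hxx, hyy, hy]
  ring

lemma driftLaplacian_comp_const_add (w : ℝ → ℝ → ℝ) (a x y : ℝ) :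
    driftLaplacian c (fun x y => w (a + x) y) x y = driftLaplacian c w (a + x) y := by
  have hx (x y : ℝ) : pdx (fun x y => w (a + x) y) x y = pdx w (a + x) y :=
    deriv_comp_const_add (fun t => w t y) a x
  have hxx : pdxx (fun x y => w (a + x) y) x y = pdxx w (a + x) y := by
    simp only [pdxx, hx]
    exact deriv_comp_const_add (fun t => pdx w t y) a x
  simp only [driftLaplacian, hxx, pdyy, pdy]

lemma driftLaplacian_comp_const_sub (w : ℝ → ℝ → ℝ) (a x y : ℝ) :
    driftLaplacian c (fun x y => w (a - x) y) x y = driftLaplacian c w (a - x) y := by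
  have hx (x y : ℝ) : pdx (fun x y => w (a - x) y) x y = -pdx w (a - x) y :=
    deriv_comp_const_sub (fun t => w t y) a x
  have hxx : pdxx (fun x y => w (a - x) y) x y = pdxx w (a - x) y := by
    simp only [pdxx, hx, deriv.fun_neg]
    exact neg_eq_iff_eq_neg.2 (deriv_comp_const_sub (fun t => pdx w t y) a x)
  simp only [driftLaplacian, hxx, pdyy, pdy]

lemma deriv_deriv_nonpos_of_isLocalMax {f : ℝ → ℝ} {a : ℝ} (h : IsLocalMax f a)
    (hf : ContinuousAt f a) : deriv (deriv f) a ≤ 0 := by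
  by_contra! hpos
  have hmin : IsLocalMin f a := isLocalMin_of_deriv_deriv_pos hpos h.deriv_eq_zero hf
  have hconst : f =ᶠ[nhds a] fun _ => f a := by
    filter_upwards [h, hmin] with x hle hge
    exact le_antisymm hle hge
  have hzero : deriv (deriv f) a = 0 := by simpa using hconst.deriv.deriv_eq
  exact hpos.ne' hzero

lemma driftLaplacian_nonpos_of_isLocalMax (hw : Continuous ↿w) {p : ℝ × ℝ}
    (h : IsLocalMax ↿w p) : driftLaplacian c w p.1 p.2 ≤ 0 := by
  have hx : IsLocalMax (fun t => w t p.2) p.1 :=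
    h.comp_continuous (g := fun t : ℝ => (t, p.2)) (by fun_prop)
  have hy : IsLocalMax (fun t => w p.1 t) p.2 :=
    h.comp_continuous (g := fun t : ℝ => (p.1, t)) (by fun_prop)
  have hxx : pdxx w p.1 p.2 ≤ 0 :=
    deriv_deriv_nonpos_of_isLocalMax hx (by fun_prop)
  have hyy : pdyy w p.1 p.2 ≤ 0 :=
    deriv_deriv_nonpos_of_isLocalMax hy (by fun_prop)
  have hy₀ : pdy w p.1 p.2 = 0 := hy.deriv_eq_zero
  rw [driftLaplacian, hy₀, mul_zero, add_zero]
  exact add_nonpos hxx hyy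

lemma le_of_driftLaplacian_pos_of_le_frontier {K : Set (ℝ × ℝ)} {C : ℝ} (hw : Continuous ↿w)
    (hK : IsCompact K) (hpos : ∀ p ∈ interior K, 0 < driftLaplacian c w p.1 p.2)
    (hC : ∀ p ∈ frontier K, w p.1 p.2 ≤ C) {p : ℝ × ℝ} (hp : p ∈ K) : w p.1 p.2 ≤ C := by
  obtain ⟨q, hq, hmax⟩ := hK.exists_isMaxOn ⟨p, hp⟩ hw.continuousOn
  refine (hmax hp).trans (hC q ?_)
  rw [hK.isClosed.frontier_eq]
  refine ⟨hq, fun hint => (hpos q hint).not_ge ?_⟩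
  exact driftLaplacian_nonpos_of_isLocalMax hw (hmax.isLocalMax (mem_interior_iff_mem_nhds.1 hint))

end DriftLaplacian

/-- The comparison function `A (s - s²/2) + B (t - b)²` on the square
`[0, 1] × [b - 1, b + 1]`. It vanishes at `(0, b)`, is nonnegative on the square and, for
`A ≥ 2 B`, is at least `B` on the sides other than `s = 0`. -/
noncomputable def barrier (A B b s t : ℝ) : ℝ := A * (s - s ^ 2 / 2) + B * (t - b) ^ 2

section GradientBound

variable {w u : ℝ → ℝ → ℝ} {A B N b c s t : ℝ}

lemma contDiff_barrier {n : WithTop ℕ∞} (A B b : ℝ) : ContDiff ℝ n ↿(barrier A B b) := by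
  change ContDiff ℝ n fun p : ℝ × ℝ => A * (p.1 - p.1 ^ 2 / 2) + B * (p.2 - b) ^ 2
  fun_prop

lemma driftLaplacian_barrier (A B b s t : ℝ) :
    driftLaplacian c (barrier A B b) s t = -A + 2 * B + c * (2 * B * (t - b)) := by
  have hs (s t : ℝ) : pdx (barrier A B b) s t = A * (1 - s) :=
    (((((hasDerivAt_id s).sub (((hasDerivAt_id s).pow 2).div_const 2)).const_mul A).add_const
      (B * (t - b) ^ 2)).congr_deriv (by simp)).deriv
  have ht (s t : ℝ) : pdy (barrier A B b) s t = 2 * B * (t - b) :=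
    ((((((hasDerivAt_id t).sub_const b).pow 2).const_mul B).const_add
      (A * (s - s ^ 2 / 2))).congr_deriv (by simp; ring)).deriv
  simp [driftLaplacian, pdxx, pdyy, hs, ht]

lemma barrier_nonneg (hA : 0 ≤ A) (hB : 0 ≤ B) (hs : s ∈ Set.Icc (0 : ℝ) 1) (b t : ℝ) :
    0 ≤ barrier A B b s t := by
  have : 0 ≤ s - s ^ 2 / 2 := by nlinarith [hs.1, hs.2]
  unfold barrier
  positivity

lemma eq_zero_or_le_barrier_of_mem_frontier (hB : 0 ≤ B) (hAB : 2 * B ≤ A)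
    (h : (s, t) ∈ frontier (Set.Icc (0 : ℝ) 1 ×ˢ Set.Icc (b - 1) (b + 1))) :
    s = 0 ∨ B ≤ barrier A B b s t := by
  have hA : 0 ≤ A := by linarith
  rw [frontier_prod_eq, frontier_Icc zero_le_one, frontier_Icc (by linarith),
    isClosed_Icc.closure_eq, isClosed_Icc.closure_eq] at h
  rcases h with ⟨hs, rfl | rfl⟩ | ⟨rfl | rfl, -⟩
  · have := barrier_nonneg hA le_rfl hs b b
    exact .inr (by unfold barrier at *; linarith)
  · have := barrier_nonneg hA le_rfl hs b b
    exact .inr (by unfold barrier at *; linarith)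
  · exact .inl rfl
  · have : 0 ≤ B * (t - b) ^ 2 := by positivity
    exact .inr (by unfold barrier; linarith)

lemma le_mul_of_neg_le_driftLaplacian (hw : ContDiff ℝ 2 ↿w) (hw₀ : ∀ t, w 0 t = 0)
    (hB : ∀ s t, w s t ≤ B) (hN : ∀ s t, -N ≤ driftLaplacian c w s t) (hN₀ : 0 ≤ N)
    (hs : s ∈ Set.Icc (0 : ℝ) 1) (b : ℝ) : w s b ≤ (N + 2 * B * (1 + |c|) + 1) * s := by
  have hB₀ : 0 ≤ B := hw₀ 0 ▸ hB 0 0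
  set A := N + 2 * B * (1 + |c|) + 1 with hA
  have hAB : 2 * B ≤ A := by linarith [hA, mul_nonneg hB₀ (abs_nonneg c)]
  have hA₀ : 0 ≤ A := by linarith
  have hsub : Continuous ↿(fun s t => w s t - barrier A B b s t) :=
    (hw.sub (contDiff_barrier A B b)).continuous
  have hpos : ∀ p ∈ interior (Set.Icc (0 : ℝ) 1 ×ˢ Set.Icc (b - 1) (b + 1)),
      0 < driftLaplacian c (fun s t => w s t - barrier A B b s t) p.1 p.2 := by
    rintro ⟨r, t⟩ hrt
    obtain ⟨-, ht⟩ := interior_subset hrt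
    have hct : c * (2 * B * (t - b)) ≤ |c| * (2 * B * 1) := by
      refine (le_abs_self _).trans ?_
      rw [abs_mul, abs_mul, abs_of_nonneg (by positivity : 0 ≤ 2 * B)]
      gcongr
      exact abs_le.2 ⟨by linarith [ht.1], by linarith [ht.2]⟩
    rw [driftLaplacian_sub hw (contDiff_barrier A B b), driftLaplacian_barrier]
    linarith [hN r t]
  have hfrontier : ∀ p ∈ frontier (Set.Icc (0 : ℝ) 1 ×ˢ Set.Icc (b - 1) (b + 1)),
      w p.1 p.2 - barrier A B b p.1 p.2 ≤ 0 := by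
    rintro ⟨r, t⟩ hrt
    rcases eq_zero_or_le_barrier_of_mem_frontier hB₀ hAB hrt with rfl | hbarrier
    · simpa [hw₀] using barrier_nonneg hA₀ hB₀ (by simp) b t
    · exact sub_nonpos.2 ((hB r t).trans hbarrier)
  have hle : w s b - barrier A B b s b ≤ 0 := le_of_driftLaplacian_pos_of_le_frontier
    (p := (s, b)) hsub (isCompact_Icc.prod isCompact_Icc) hpos hfrontier ⟨hs, by simp⟩
  have : 0 ≤ A * (s ^ 2 / 2) := by positivity
  unfold barrier at hle
  linarith

lemma sub_le_mul_sub_of_abs_driftLaplacian_le (hu : ContDiff ℝ 2 ↿u) (hB : ∀ x y, |u x y| ≤ B)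
    (hN : ∀ x y, |driftLaplacian c u x y| ≤ N) {x₁ x₂ : ℝ} (hx : x₁ ≤ x₂) (hx' : x₂ ≤ x₁ + 2)
    (y : ℝ) : u x₂ y - u x₁ y ≤ (N + 2 * B * (1 + |c|) + 1) * (x₂ - x₁) := by
  -- The odd part of `u` about the midpoint `a` vanishes on the line `x = a`.
  set a := (x₁ + x₂) / 2
  set s := (x₂ - x₁) / 2 with hs
  have hadd : ContDiff ℝ 2 ↿(fun x y => u (a + x) y) :=
    hu.comp (by fun_prop : ContDiff ℝ 2 fun p : ℝ × ℝ => (a + p.1, p.2))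
  have hsub : ContDiff ℝ 2 ↿(fun x y => u (a - x) y) :=
    hu.comp (by fun_prop : ContDiff ℝ 2 fun p : ℝ × ℝ => (a - p.1, p.2))
  have hle : u (a + s) y - u (a - s) y ≤ (2 * N + 2 * (2 * B) * (1 + |c|) + 1) * s := by
    refine le_mul_of_neg_le_driftLaplacian (c := c) (w := fun x y => u (a + x) y - u (a - x) y)
      (hadd.sub hsub) (by simp) (fun x y => ?_) (fun x y => ?_) ?_ ⟨?_, ?_⟩ y
    · linarith [(abs_le.1 (hB (a + x) y)).2, (abs_le.1 (hB (a - x) y)).1]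
    · rw [driftLaplacian_sub hadd hsub, driftLaplacian_comp_const_add,
        driftLaplacian_comp_const_sub]
      linarith [(abs_le.1 (hN (a + x) y)).1, (abs_le.1 (hN (a - x) y)).2]
    · linarith [(abs_nonneg _).trans (hN 0 0)]
    · linarith
    · linarith
  rw [show a + s = x₂ by ring, show a - s = x₁ by ring, hs] at hle
  linarith

lemma abs_sub_le_mul_abs_sub_of_abs_driftLaplacian_le (hu : ContDiff ℝ 2 ↿u)
    (hB : ∀ x y, |u x y| ≤ B) (hN : ∀ x y, |driftLaplacian c u x y| ≤ N) {x₁ x₂ : ℝ}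
    (hx : |x₂ - x₁| ≤ 2) (y : ℝ) :
    |u x₂ y - u x₁ y| ≤ (N + 2 * B * (1 + |c|) + 1) * |x₂ - x₁| := by
  wlog hle : x₁ ≤ x₂ generalizing x₁ x₂
  · rw [abs_sub_comm, abs_sub_comm x₂]
    exact this (by rwa [abs_sub_comm]) (le_of_not_ge hle)
  rw [abs_of_nonneg (sub_nonneg.2 hle)] at hx ⊢
  refine abs_le.2 ⟨?_, sub_le_mul_sub_of_abs_driftLaplacian_le hu hB hN hle (by linarith) y⟩
  have := sub_le_mul_sub_of_abs_driftLaplacian_le (c := c) (u := fun x y => -u x y) hu.neg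
    (by simpa using hB) (by simpa [driftLaplacian_neg] using hN) hle (by linarith) y
  linarith

lemma abs_pdx_le_of_abs_driftLaplacian_le (hu : ContDiff ℝ 2 ↿u) (hB : ∀ x y, |u x y| ≤ B)
    (hN : ∀ x y, |driftLaplacian c u x y| ≤ N) (x y : ℝ) :
    |pdx u x y| ≤ N + 2 * B * (1 + |c|) + 1 := by
  have hN₀ : 0 ≤ N := (abs_nonneg _).trans (hN 0 0)
  have hB₀ : 0 ≤ B := (abs_nonneg _).trans (hB 0 0)
  refine (hasDerivAt_pdx (hu.differentiable two_ne_zero) x y).le_of_lip' (by positivity) ?_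
  filter_upwards [closedBall_mem_nhds x two_pos] with t ht
  exact abs_sub_le_mul_abs_sub_of_abs_driftLaplacian_le hu hB hN ht y

end GradientBound

section CompactlySupportedWeights

variable {φ g : ℝ → ℝ} {w : ℝ → ℝ → ℝ} {c : ℝ}

lemma integrable_mul_of_hasCompactSupport (hφ : Continuous φ) (hφs : HasCompactSupport φ)
    (hg : Continuous g) : Integrable fun x => φ x * g x :=
  (hφ.mul hg).integrable_of_hasCompactSupport hφs.mul_right

lemma continuous_integral_mul (hφ : Continuous φ) (hφs : HasCompactSupport φ)
    (hw : Continuous ↿w) : Continuous fun y => ∫ x, φ x * w x y := by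
  rw [← continuousOn_univ]
  refine continuousOn_integral_of_compact_support (k := tsupport φ) hφs ?_ fun y x _ hx => ?_
  · have : Continuous fun q : ℝ × ℝ => φ q.2 * w q.2 q.1 := by fun_prop
    exact this.continuousOn
  · rw [image_eq_zero_of_notMem_tsupport hx, zero_mul]

lemma hasDerivAt_integral_mul (hφ : Continuous φ) (hφs : HasCompactSupport φ)
    (hw : ContDiff ℝ 1 ↿w) (y : ℝ) :
    HasDerivAt (fun y => ∫ x, φ x * w x y) (∫ x, φ x * pdy w x y) y := by
  have hw' : Continuous ↿(pdy w) := (contDiff_pdy (m := 0) hw (zero_add 1).le).continuous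
  have hwc : Continuous ↿w := hw.continuous
  have hK : IsCompact (tsupport φ ×ˢ closedBall y 1) :=
    IsCompact.prod hφs (isCompact_closedBall y 1)
  obtain ⟨C, hC⟩ := hK.exists_bound_of_continuousOn hw'.continuousOn
  refine (hasDerivAt_integral_of_dominated_loc_of_deriv_le (F := fun t x => φ x * w x t)
    (F' := fun t x => φ x * pdy w x t) (bound := fun x => ‖φ x‖ * C)
    (closedBall_mem_nhds y one_pos) ?_ ?_ ?_ ?_ ?_ ?_).2
  · exact .of_forall fun t => Continuous.aestronglyMeasurable (by fun_prop)
  · exact integrable_mul_of_hasCompactSupport hφ hφs (by fun_prop)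
  · exact Continuous.aestronglyMeasurable (by fun_prop)
  · refine .of_forall fun x t ht => ?_
    by_cases hx : x ∈ tsupport φ
    · rw [norm_mul]
      exact mul_le_mul_of_nonneg_left (hC (x, t) ⟨hx, ht⟩) (norm_nonneg _)
    · simp [image_eq_zero_of_notMem_tsupport hx]
  · exact integrable_mul_of_hasCompactSupport hφ.norm hφs.norm continuous_const
  · exact .of_forall fun x t _ =>
      (hasDerivAt_pdy (hw.differentiable one_ne_zero) x t).const_mul (φ x)

lemma integral_mul_deriv_of_hasCompactSupport (hφ : ContDiff ℝ 1 φ) (hφs : HasCompactSupport φ)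
    (hg : ContDiff ℝ 1 g) : ∫ x, φ x * deriv g x = -∫ x, deriv φ x * g x := by
  have hg' : Continuous (deriv g) := hg.continuous_deriv le_rfl
  have hφ' : Continuous (deriv φ) := hφ.continuous_deriv le_rfl
  exact integral_mul_deriv_eq_deriv_mul_of_integrable
    (fun x _ => (hφ.differentiable one_ne_zero x).hasDerivAt)
    (fun x _ => (hg.differentiable one_ne_zero x).hasDerivAt)
    (integrable_mul_of_hasCompactSupport hφ.continuous hφs hg')
    (integrable_mul_of_hasCompactSupport hφ' hφs.deriv hg.continuous)
    (integrable_mul_of_hasCompactSupport hφ.continuous hφs hg.continuous)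

lemma integral_mul_pdx (hφ : ContDiff ℝ 1 φ) (hφs : HasCompactSupport φ) (hw : ContDiff ℝ 1 ↿w)
    (y : ℝ) : ∫ x, φ x * pdx w x y = -∫ x, deriv φ x * w x y :=
  integral_mul_deriv_of_hasCompactSupport hφ hφs
    (hw.comp (by fun_prop : ContDiff ℝ 1 fun x : ℝ => (x, y)))

lemma integral_mul_driftLaplacian (hφ : ContDiff ℝ 2 φ) (hφs : HasCompactSupport φ)
    (hw : ContDiff ℝ 2 ↿w) (y : ℝ) :
    ∫ x, φ x * driftLaplacian c w x y =
      (∫ x, deriv (deriv φ) x * w x y) + (∫ x, φ x * pdyy w x y) + c * ∫ x, φ x * pdy w x y := by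
  have hxx : Continuous ↿(pdxx w) := (contDiff_pdxx (m := 0) hw (zero_add 2).le).continuous
  have hyy : Continuous ↿(pdyy w) := (contDiff_pdyy (m := 0) hw (zero_add 2).le).continuous
  have hy : Continuous ↿(pdy w) := (contDiff_pdy hw one_add_one_eq_two.le).continuous
  have hφw {g : ℝ → ℝ} (hg : Continuous g) : Integrable fun x => φ x * g x :=
    integrable_mul_of_hasCompactSupport hφ.continuous hφs hg
  have hparts : ∫ x, φ x * pdxx w x y = ∫ x, deriv (deriv φ) x * w x y := by
    have h := integral_mul_pdx (hφ.of_le one_le_two) hφs (contDiff_pdx hw one_add_one_eq_two.le) y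
    have h' := integral_mul_pdx (ContDiff.deriv' (n := 1) hφ) hφs.deriv (hw.of_le one_le_two) y
    rwa [h', neg_neg] at h
  rw [← hparts, ← integral_const_mul, ← integral_add (hφw (by fun_prop)) (hφw (by fun_prop)),
    ← integral_add ((hφw (by fun_prop)).fun_add (hφw (by fun_prop)))
      ((hφw (by fun_prop)).const_mul c)]
  refine integral_congr_ae (.of_forall fun x => ?_)
  simp only [driftLaplacian]
  ring

lemma tendsto_integral_mul_comp {G : ℝ → ℝ} {u : ℝ → ℝ → ℝ} {p q σ : ℝ} {l : Filter ℝ}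
    [l.IsCountablyGenerated] (hφ : Continuous φ) (hφs : HasCompactSupport φ) (hG : Continuous G)
    (hu : Continuous ↿u) (hpq : ∀ x y, u x y ∈ Set.Icc p q)
    (hlim : ∀ x, Tendsto (fun y => u x y) l (nhds σ)) :
    Tendsto (fun y => ∫ x, φ x * G (u x y)) l (nhds (∫ x, φ x * G σ)) := by
  obtain ⟨C, hC⟩ := isCompact_Icc.exists_bound_of_continuousOn (s := Set.Icc p q) hG.continuousOn
  refine tendsto_integral_filter_of_dominated_convergence (fun x => ‖φ x‖ * C) ?_ ?_ ?_ ?_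
  · exact .of_forall fun y => Continuous.aestronglyMeasurable (by fun_prop)
  · refine .of_forall fun y => .of_forall fun x => ?_
    rw [norm_mul]
    exact mul_le_mul_of_nonneg_left (hC _ (hpq x y)) (norm_nonneg _)
  · exact integrable_mul_of_hasCompactSupport hφ.norm hφs.norm continuous_const
  · exact .of_forall fun x => ((hG.tendsto σ).comp (hlim x)).const_mul (φ x)

end CompactlySupportedWeights

/-- The smooth cutoff at scale `S`: it equals `1` on `[-S, S]` and vanishes outside
`[-2 * S, 2 * S]`. All cutoffs are dilations of the same bump function, so that their derivatives
scale like powers of `1 / S`. -/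
noncomputable def cutoff (S x : ℝ) : ℝ :=
  (⟨1, 2, one_pos, one_lt_two⟩ : ContDiffBump (0 : ℝ)) (S⁻¹ * x)

section Cutoff

variable {S x C : ℝ} {g : ℝ → ℝ}

lemma cutoff_eq_cutoff_one (S : ℝ) : cutoff S = fun x => cutoff 1 (S⁻¹ * x) := by
  ext x
  simp [cutoff]

lemma contDiff_cutoff {n : ℕ∞} (S : ℝ) : ContDiff ℝ n (cutoff S) :=
  (ContDiffBump.contDiff _).comp (contDiff_const.mul contDiff_id)

@[fun_prop]
lemma continuous_cutoff (S : ℝ) : Continuous (cutoff S) :=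
  (contDiff_cutoff (n := 0) S).continuous

lemma continuous_deriv_cutoff (S : ℝ) : Continuous (deriv (cutoff S)) :=
  (contDiff_cutoff (n := 1) S).continuous_deriv le_rfl

lemma hasCompactSupport_cutoff (hS : S ≠ 0) : HasCompactSupport (cutoff S) :=
  (ContDiffBump.hasCompactSupport _).comp_homeomorph (Homeomorph.mulLeft₀ S⁻¹ (inv_ne_zero hS))

lemma cutoff_nonneg (S x : ℝ) : 0 ≤ cutoff S x := ContDiffBump.nonneg _

lemma cutoff_le_one (S x : ℝ) : cutoff S x ≤ 1 := ContDiffBump.le_one _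

lemma cutoff_eq_one (h : |x| ≤ S) : cutoff S x = 1 := by
  refine ContDiffBump.one_of_mem_closedBall _ ?_
  have hS : 0 ≤ S := (abs_nonneg x).trans h
  rw [mem_closedBall_zero_iff, norm_mul, norm_inv, norm_eq_abs, norm_eq_abs, abs_of_nonneg hS]
  exact inv_mul_le_one_of_le₀ h hS

lemma cutoff_eq_zero (hS : 0 < S) (h : 2 * S ≤ |x|) : cutoff S x = 0 := by
  refine ContDiffBump.zero_of_le_dist _ ?_
  rwa [dist_zero_right, norm_mul, norm_inv, norm_eq_abs, norm_eq_abs, abs_of_pos hS,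
    le_inv_mul_iff₀' hS]

lemma cutoff_le_cutoff_two_mul (hS : 0 < S) (x : ℝ) : cutoff S x ≤ cutoff (2 * S) x := by
  rcases le_total |x| (2 * S) with hx | hx
  · exact (cutoff_le_one S x).trans_eq (cutoff_eq_one hx).symm
  · exact (cutoff_eq_zero hS hx).trans_le (cutoff_nonneg _ _)

lemma deriv_cutoff (S x : ℝ) : deriv (cutoff S) x = S⁻¹ * deriv (cutoff 1) (S⁻¹ * x) := by
  rw [cutoff_eq_cutoff_one S]
  exact deriv_comp_mul_left S⁻¹ (cutoff 1) x

lemma deriv_deriv_cutoff (S x : ℝ) :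
    deriv (deriv (cutoff S)) x = (S⁻¹) ^ 2 * deriv (deriv (cutoff 1)) (S⁻¹ * x) := by
  rw [funext (deriv_cutoff S), deriv_const_mul_field,
    deriv_comp_mul_left S⁻¹ (deriv (cutoff 1)) x, smul_eq_mul]
  ring

lemma exists_abs_deriv_cutoff_le : ∃ C, ∀ S > 0, ∀ x, |deriv (cutoff S) x| ≤ C / S := by
  obtain ⟨C, hC⟩ := (hasCompactSupport_cutoff one_ne_zero).deriv.exists_bound_of_continuous
    (continuous_deriv_cutoff 1)
  refine ⟨C, fun S hS x => ?_⟩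
  rw [deriv_cutoff, abs_mul, abs_of_pos (inv_pos.2 hS), mul_comm, div_eq_mul_inv]
  gcongr
  exact hC _

lemma integral_abs_deriv_cutoff (hS : 0 < S) :
    ∫ x, |deriv (cutoff S) x| = ∫ x, |deriv (cutoff 1) x| := by
  simp_rw [deriv_cutoff S, abs_mul]
  rw [integral_const_mul, Measure.integral_comp_mul_left (fun x => |deriv (cutoff 1) x|), inv_inv,
    smul_eq_mul, ← mul_assoc, ← abs_mul, inv_mul_cancel₀ hS.ne', abs_one, one_mul]

lemma exists_abs_deriv_deriv_cutoff_le :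
    ∃ C, 0 ≤ C ∧ ∀ S ≥ 1, ∀ x, |deriv (deriv (cutoff S)) x| ≤ C * cutoff (2 * S) x := by
  obtain ⟨C, hC⟩ := (hasCompactSupport_cutoff one_ne_zero).deriv.deriv.exists_bound_of_continuous
    ((contDiff_cutoff (n := 1 + 1) 1).deriv'.continuous_deriv le_rfl)
  have hC₀ : 0 ≤ C := (norm_nonneg _).trans (hC 0)
  refine ⟨C, hC₀, fun S hS x => ?_⟩
  rcases le_or_gt |x| (2 * S) with hx | hx
  · rw [cutoff_eq_one hx, mul_one, deriv_deriv_cutoff, abs_mul, abs_of_nonneg (by positivity)]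
    exact (mul_le_of_le_one_left (abs_nonneg _)
      (pow_le_one₀ (by positivity) (inv_le_one_of_one_le₀ hS))).trans (hC _)
  · have hzero : cutoff S =ᶠ[nhds x] fun _ => 0 := by
      filter_upwards [continuous_abs.continuousAt.eventually_const_lt hx] with t ht
      exact cutoff_eq_zero (by positivity) ht.le
    have hderiv : deriv (deriv (cutoff S)) x = 0 := by simpa using hzero.deriv.deriv_eq
    rw [hderiv, abs_zero]
    exact mul_nonneg hC₀ (cutoff_nonneg _ _)

lemma tendsto_integral_cutoff_mul (hg : Integrable g) :
    Tendsto (fun S => ∫ x, cutoff S x * g x) atTop (nhds (∫ x, g x)) := by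
  refine tendsto_integral_filter_of_dominated_convergence (fun x => ‖g x‖) ?_ ?_ hg.norm ?_
  · exact .of_forall fun S => (continuous_cutoff S).aestronglyMeasurable.mul hg.1
  · refine .of_forall fun S => .of_forall fun x => ?_
    rw [norm_mul, norm_of_nonneg (cutoff_nonneg S x)]
    exact mul_le_of_le_one_left (norm_nonneg _) (cutoff_le_one S x)
  · refine .of_forall fun x => tendsto_const_nhds.congr' ?_
    filter_upwards [eventually_ge_atTop |x|] with S hS
    rw [cutoff_eq_one hS, one_mul]

lemma integrable_of_integral_cutoff_mul_le (hg : Continuous g) (hg₀ : ∀ x, 0 ≤ g x)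
    (hC : ∀ S ≥ 1, ∫ x, cutoff S x * g x ≤ C) : Integrable g := by
  refine AECover.integrable_of_integral_bounded_of_nonneg_ae (l := atTop)
    (aecover_Icc tendsto_neg_atTop_atBot tendsto_id) C (fun S => hg.integrableOn_Icc)
    (.of_forall hg₀) ?_
  filter_upwards [eventually_ge_atTop 1] with S hS
  refine le_trans ?_ (hC S hS)
  have hS₀ : S ≠ 0 := by positivity
  rw [← setIntegral_congr_fun (f := fun x => cutoff S x * g x) measurableSet_Icc]
  · exact setIntegral_le_integral
      (integrable_mul_of_hasCompactSupport (continuous_cutoff S) (hasCompactSupport_cutoff hS₀) hg)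
      (.of_forall fun x => mul_nonneg (cutoff_nonneg S x) (hg₀ x))
  · intro x hx
    simp [cutoff_eq_one (abs_le.2 hx)]

end Cutoff

/-- A potential with two wells of equal depth at the endpoints of `[p, q]`, the natural class of
nonlinearities for fronts connecting `p` to `q`. The common depth is normalized to `0`, and no
condition is imposed outside `[p, q]` or on the shape of the barrier between the wells. -/
structure IsBalancedPotential (F : ℝ → ℝ) (p q : ℝ) : Prop where
  contDiff : ContDiff ℝ 2 F
  nonneg : ∀ s ∈ Set.Icc p q, 0 ≤ F s
  left_eq_zero : F p = 0
  right_eq_zero : F q = 0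

/-- A solution of `Δu + c uᵧ = F'(u)`, nondecreasing in `y` and connecting `p` to `q` along every
vertical line; the limits need not be uniform in `x`. -/
structure IsMonotoneFront (F : ℝ → ℝ) (c p q : ℝ) (u : ℝ → ℝ → ℝ) : Prop where
  contDiff : ContDiff ℝ 3 ↿u
  equation : ∀ x y, driftLaplacian c u x y = deriv F (u x y)
  pdy_nonneg : ∀ x y, 0 ≤ pdy u x y
  tendsto_atBot : ∀ x, Tendsto (fun y => u x y) atBot (nhds p)
  tendsto_atTop : ∀ x, Tendsto (fun y => u x y) atTop (nhds q)

/-- The density of the Hamiltonian `ρ`, for which `y` plays the role of time. -/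
noncomputable def hamiltonianDensity (F : ℝ → ℝ) (u : ℝ → ℝ → ℝ) (x y : ℝ) : ℝ :=
  (1 / 2) * ((pdx u x y) ^ 2 - (pdy u x y) ^ 2) + F (u x y)

/-- The Allen-Cahn energy density, which dominates the Hamiltonian density. -/
noncomputable def energyDensity (F : ℝ → ℝ) (u : ℝ → ℝ → ℝ) (x y : ℝ) : ℝ :=
  (1 / 2) * ((pdx u x y) ^ 2 + (pdy u x y) ^ 2) + F (u x y)

section Densities

variable {F : ℝ → ℝ} {u : ℝ → ℝ → ℝ} {x y : ℝ}

lemma energyDensity_eq_add (F : ℝ → ℝ) (u : ℝ → ℝ → ℝ) (x y : ℝ) :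
    energyDensity F u x y = hamiltonianDensity F u x y + pdy u x y ^ 2 := by
  simp only [energyDensity, hamiltonianDensity]
  ring

lemma energyDensity_nonneg (hF : 0 ≤ F (u x y)) : 0 ≤ energyDensity F u x y := by
  unfold energyDensity
  positivity

lemma abs_hamiltonianDensity_le (hF : 0 ≤ F (u x y)) :
    |hamiltonianDensity F u x y| ≤ energyDensity F u x y := by
  unfold hamiltonianDensity energyDensity
  rw [abs_le]
  constructor <;> linarith [sq_nonneg (pdx u x y), sq_nonneg (pdy u x y)]

lemma abs_pdx_mul_pdy_le (hF : 0 ≤ F (u x y)) :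
    |pdx u x y * pdy u x y| ≤ energyDensity F u x y := by
  unfold energyDensity
  rw [abs_mul]
  linarith [two_mul_le_add_sq |pdx u x y| |pdy u x y|, sq_abs (pdx u x y), sq_abs (pdy u x y)]

lemma sq_pdy_le (hF : 0 ≤ F (u x y)) : pdy u x y ^ 2 ≤ 2 * energyDensity F u x y := by
  unfold energyDensity
  linarith [sq_nonneg (pdx u x y)]

lemma contDiff_hamiltonianDensity (hF : ContDiff ℝ 1 F) (hu : ContDiff ℝ 2 ↿u) :
    ContDiff ℝ 1 ↿(hamiltonianDensity F u) :=
  (contDiff_const.mul (((contDiff_pdx hu one_add_one_eq_two.le).pow 2).sub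
    ((contDiff_pdy hu one_add_one_eq_two.le).pow 2))).add (hF.comp (hu.of_le one_le_two))

lemma continuous_energyDensity (hF : Continuous F) (hu : ContDiff ℝ 1 ↿u) :
    Continuous ↿(energyDensity F u) :=
  (continuous_const.mul (((contDiff_pdx (m := 0) hu (zero_add 1).le).continuous.pow 2).add
    ((contDiff_pdy (m := 0) hu (zero_add 1).le).continuous.pow 2))).add (hF.comp hu.continuous)

end Densities

section Linearization

variable {w : ℝ → ℝ → ℝ} {c : ℝ}

lemma driftLaplacian_pdy (hw : ContDiff ℝ 3 ↿w) (x y : ℝ) :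
    driftLaplacian c (pdy w) x y = pdy (driftLaplacian c w) x y := by
  have hxx : ContDiff ℝ 1 ↿(pdxx w) := contDiff_pdxx hw (by norm_num)
  have hyy : ContDiff ℝ 1 ↿(pdyy w) := contDiff_pdyy hw (by norm_num)
  have hx : ContDiff ℝ 2 ↿(pdx w) := contDiff_pdx hw (by norm_num)
  have hy : ContDiff ℝ 2 ↿(pdy w) := contDiff_pdy hw (by norm_num)
  have hw₂ : ContDiff ℝ 2 ↿w := hw.of_le (by norm_num)
  have hcomm : pdxx (pdy w) x y = pdy (pdxx w) x y := by
    have : pdx (pdy w) = pdy (pdx w) := funext₂ fun s t => (pdy_pdx_comm hw₂ s t).symm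
    simp only [pdxx, this]
    exact (pdy_pdx_comm hx x y).symm
  have hderiv := ((hasDerivAt_pdy (hxx.differentiable one_ne_zero) x y).add
    (hasDerivAt_pdy (hyy.differentiable one_ne_zero) x y)).add
    ((hasDerivAt_pdy (hy.differentiable two_ne_zero) x y).const_mul c)
  rw [driftLaplacian, hcomm]
  exact hderiv.deriv.symm

end Linearization

namespace IsMonotoneFront

variable {F φ ψ : ℝ → ℝ} {c p q σ a b A C E K M S : ℝ} {u : ℝ → ℝ → ℝ}

lemma contDiff_two (hu : IsMonotoneFront F c p q u) : ContDiff ℝ 2 ↿u :=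
  hu.contDiff.of_le (by norm_num)

lemma contDiff_two_pdy (hu : IsMonotoneFront F c p q u) : ContDiff ℝ 2 ↿(pdy u) :=
  contDiff_pdy hu.contDiff (by norm_num)

lemma continuous_pdx (hu : IsMonotoneFront F c p q u) : Continuous ↿(pdx u) :=
  (contDiff_pdx hu.contDiff_two one_add_one_eq_two.le).continuous

lemma monotone (hu : IsMonotoneFront F c p q u) (x : ℝ) : Monotone fun y => u x y :=
  monotone_of_hasDerivAt_nonneg
    (hasDerivAt_pdy (hu.contDiff.differentiable three_ne_zero) x) (hu.pdy_nonneg x)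

lemma mem_Icc (hu : IsMonotoneFront F c p q u) (x y : ℝ) : u x y ∈ Set.Icc p q :=
  ⟨(hu.monotone x).le_of_tendsto (hu.tendsto_atBot x) y,
    (hu.monotone x).ge_of_tendsto (hu.tendsto_atTop x) y⟩

lemma potential_nonneg (hF : IsBalancedPotential F p q) (hu : IsMonotoneFront F c p q u)
    (x y : ℝ) : 0 ≤ F (u x y) :=
  hF.nonneg _ (hu.mem_Icc x y)

lemma exists_abs_comp_le {g : ℝ → ℝ} (hu : IsMonotoneFront F c p q u) (hg : Continuous g) :
    ∃ C, ∀ x y, |g (u x y)| ≤ C :=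
  (isCompact_Icc.exists_bound_of_continuousOn hg.continuousOn).imp
    fun _ hC x y => hC _ (hu.mem_Icc x y)

lemma exists_abs_pdx_le (hF : ContDiff ℝ 1 F) (hu : IsMonotoneFront F c p q u) :
    ∃ K, ∀ x y, |pdx u x y| ≤ K := by
  obtain ⟨B, hB⟩ := hu.exists_abs_comp_le continuous_id
  obtain ⟨N, hN⟩ := hu.exists_abs_comp_le (hF.continuous_deriv le_rfl)
  exact ⟨_, abs_pdx_le_of_abs_driftLaplacian_le hu.contDiff_two hB
    fun x y => (congrArg _ (hu.equation x y)).trans_le (hN x y)⟩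

lemma linearized_equation (hF : ContDiff ℝ 2 F) (hu : IsMonotoneFront F c p q u) (x y : ℝ) :
    driftLaplacian c (pdy u) x y = deriv (deriv F) (u x y) * pdy u x y := by
  have hF' : Differentiable ℝ (deriv F) :=
    (ContDiff.deriv' (n := 1) hF).differentiable one_ne_zero
  have hchain := (hF' (u x y)).hasDerivAt.comp y
    (hasDerivAt_pdy (hu.contDiff.differentiable three_ne_zero) x y)
  rw [driftLaplacian_pdy hu.contDiff, funext₂ hu.equation]
  exact hchain.deriv

lemma pdy_hamiltonianDensity (hF : Differentiable ℝ F) (hu : IsMonotoneFront F c p q u)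
    (x y : ℝ) : pdy (hamiltonianDensity F u) x y =
      pdx (fun x y => pdx u x y * pdy u x y) x y + c * pdy u x y ^ 2 := by
  have hx : Differentiable ℝ ↿(pdx u) :=
    (contDiff_pdx hu.contDiff_two one_add_one_eq_two.le).differentiable one_ne_zero
  have hy : Differentiable ℝ ↿(pdy u) := hu.contDiff_two_pdy.differentiable two_ne_zero
  have hh := (((hasDerivAt_pdy hx x y).pow 2).sub ((hasDerivAt_pdy hy x y).pow 2)).const_mul
    (1 / 2) |>.add ((hF (u x y)).hasDerivAt.comp y
      (hasDerivAt_pdy (hu.contDiff.differentiable three_ne_zero) x y))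
  have hflux : pdx (fun x y => pdx u x y * pdy u x y) x y =
      pdxx u x y * pdy u x y + pdx u x y * pdx (pdy u) x y :=
    ((hasDerivAt_pdx hx x y).mul (hasDerivAt_pdx hy x y)).deriv
  have heq : pdxx u x y + pdyy u x y + c * pdy u x y = deriv F (u x y) := hu.equation x y
  refine hh.deriv.trans ?_
  rw [hflux, ← heq, pdy_pdx_comm hu.contDiff_two]
  simp only [pdyy, pdy]
  ring

lemma four_mul_energyDensity (hu : IsMonotoneFront F c p q u) (σ x y : ℝ) :
    4 * energyDensity F u x y = driftLaplacian c (fun x y => (u x y - σ) ^ 2) x y +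
      (4 * F (u x y) - 2 * (u x y - σ) * deriv F (u x y)) := by
  have hx : pdx (fun x y => u x y - σ) = pdx u := by
    ext x y
    simp only [pdx, deriv_sub_const_fun]
  have hy : pdy (fun x y => u x y - σ) = pdy u := by
    ext x y
    simp only [pdy, deriv_sub_const_fun]
  have hL : driftLaplacian c (fun x y => u x y - σ) x y = deriv F (u x y) := by
    simp only [driftLaplacian, pdxx, pdyy, hx, hy, ← hu.equation]
  rw [driftLaplacian_sq (hu.contDiff_two.sub contDiff_const), hL, hx, hy, energyDensity]
  ring

lemma hasDerivAt_integral_mul_hamiltonianDensity (hF : ContDiff ℝ 1 F)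
    (hu : IsMonotoneFront F c p q u) (hφ : ContDiff ℝ 1 φ) (hφs : HasCompactSupport φ) (y : ℝ) :
    HasDerivAt (fun y => ∫ x, φ x * hamiltonianDensity F u x y)
      (c * (∫ x, φ x * pdy u x y ^ 2) - ∫ x, deriv φ x * (pdx u x y * pdy u x y)) y := by
  have hy : Continuous ↿(pdy u) := hu.contDiff_two_pdy.continuous
  have hflux : ContDiff ℝ 1 ↿fun x y => pdx u x y * pdy u x y :=
    (contDiff_pdx hu.contDiff_two one_add_one_eq_two.le).mul
      (contDiff_pdy hu.contDiff_two one_add_one_eq_two.le)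
  have hflux' : Continuous ↿(pdx fun x y => pdx u x y * pdy u x y) :=
    (contDiff_pdx (m := 0) hflux (zero_add 1).le).continuous
  refine (hasDerivAt_integral_mul hφ.continuous hφs
    (contDiff_hamiltonianDensity hF hu.contDiff_two) y).congr_deriv ?_
  rw [sub_eq_neg_add, ← integral_mul_pdx hφ hφs hflux y, ← integral_const_mul, ← integral_add]
  · simp only [hu.pdy_hamiltonianDensity (hF.differentiable one_ne_zero), mul_add,
      mul_left_comm c]
  · exact integrable_mul_of_hasCompactSupport hφ.continuous hφs (by fun_prop)
  · exact (integrable_mul_of_hasCompactSupport hφ.continuous hφs (by fun_prop)).const_mul c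

lemma continuous_integral_mul_sq_pdy (hu : IsMonotoneFront F c p q u) (hφ : Continuous φ)
    (hφs : HasCompactSupport φ) : Continuous fun y => ∫ x, φ x * pdy u x y ^ 2 :=
  continuous_integral_mul hφ hφs (hu.contDiff_two_pdy.continuous.pow 2)

lemma continuous_integral_mul_flux (hu : IsMonotoneFront F c p q u) (hψ : Continuous ψ)
    (hψs : HasCompactSupport ψ) : Continuous fun y => ∫ x, ψ x * (pdx u x y * pdy u x y) :=
  continuous_integral_mul hψ hψs (hu.continuous_pdx.mul hu.contDiff_two_pdy.continuous)

lemma integral_mul_hamiltonianDensity_sub (hF : ContDiff ℝ 1 F) (hu : IsMonotoneFront F c p q u)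
    (hφ : ContDiff ℝ 1 φ) (hφs : HasCompactSupport φ) (a b : ℝ) :
    (∫ x, φ x * hamiltonianDensity F u x b) - ∫ x, φ x * hamiltonianDensity F u x a =
      c * (∫ y in a..b, ∫ x, φ x * pdy u x y ^ 2) -
        ∫ y in a..b, ∫ x, deriv φ x * (pdx u x y * pdy u x y) := by
  have hdiss := hu.continuous_integral_mul_sq_pdy hφ.continuous hφs
  have hflux := hu.continuous_integral_mul_flux (hφ.continuous_deriv le_rfl) hφs.deriv
  rw [← intervalIntegral.integral_const_mul, ← intervalIntegral.integral_sub
    ((hdiss.const_mul c).intervalIntegrable _ _) (hflux.intervalIntegrable _ _)]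
  exact (intervalIntegral.integral_eq_sub_of_hasDerivAt
    (fun y _ => hu.hasDerivAt_integral_mul_hamiltonianDensity hF hφ hφs y)
    (((hdiss.const_mul c).sub hflux).intervalIntegrable _ _)).symm

lemma integral_mul_pdy_le (hu : IsMonotoneFront F c p q u) (hψ : Continuous ψ)
    (hψs : HasCompactSupport ψ) (hψ₀ : ∀ x, 0 ≤ ψ x) (a b : ℝ) :
    ∫ y in a..b, ∫ x, ψ x * pdy u x y ≤ (q - p) * ∫ x, ψ x := by
  have hint (y : ℝ) : Integrable fun x => ψ x * u x y :=
    integrable_mul_of_hasCompactSupport hψ hψs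
      (hu.contDiff.continuous.comp (by fun_prop : Continuous fun x : ℝ => (x, y)))
  have hψi : Integrable ψ := hψ.integrable_of_hasCompactSupport hψs
  rw [intervalIntegral.integral_eq_sub_of_hasDerivAt
    (fun y _ => hasDerivAt_integral_mul hψ hψs (hu.contDiff_two.of_le one_le_two) y)
    ((continuous_integral_mul hψ hψs hu.contDiff_two_pdy.continuous).intervalIntegrable _ _),
    ← integral_sub (hint b) (hint a), ← integral_const_mul]
  refine integral_mono ((hint b).sub (hint a)) (hψi.const_mul _) fun x => ?_
  have hub : u x b ≤ q := (hu.mem_Icc x b).2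
  have hua : p ≤ u x a := (hu.mem_Icc x a).1
  nlinarith [hψ₀ x]

/-- By monotonicity `u` has total variation at most `q - p` along each vertical line, so the bound
does not depend on the length of the interval. -/
lemma abs_integral_mul_flux_le (hu : IsMonotoneFront F c p q u) (hK : ∀ x y, |pdx u x y| ≤ K)
    (hψ : Continuous ψ) (hψs : HasCompactSupport ψ) (hab : a ≤ b) :
    |∫ y in a..b, ∫ x, ψ x * (pdx u x y * pdy u x y)| ≤ K * ((q - p) * ∫ x, |ψ x|) := by
  have huy : Continuous ↿(pdy u) := hu.contDiff_two_pdy.continuous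
  have hK₀ : 0 ≤ K := (abs_nonneg _).trans (hK 0 0)
  have habs : HasCompactSupport fun x => |ψ x| := hψs.norm
  have hint (y : ℝ) : Integrable fun x => |ψ x| * pdy u x y :=
    integrable_mul_of_hasCompactSupport hψ.abs habs (by fun_prop)
  have hslice (y : ℝ) : |∫ x, ψ x * (pdx u x y * pdy u x y)| ≤ K * ∫ x, |ψ x| * pdy u x y := by
    rw [← integral_const_mul, ← norm_eq_abs]
    refine norm_integral_le_of_norm_le ((hint y).const_mul K) (.of_forall fun x => ?_)
    rw [norm_mul, norm_mul, norm_of_nonneg (hu.pdy_nonneg x y), mul_left_comm]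
    exact mul_le_mul_of_nonneg_right (hK x y) (mul_nonneg (abs_nonneg _) (hu.pdy_nonneg x y))
  rw [← norm_eq_abs]
  calc ‖∫ y in a..b, ∫ x, ψ x * (pdx u x y * pdy u x y)‖
      ≤ ∫ y in a..b, K * ∫ x, |ψ x| * pdy u x y :=
        intervalIntegral.norm_integral_le_of_norm_le hab (.of_forall fun y _ => hslice y)
          (((continuous_integral_mul hψ.abs habs huy).const_mul K).intervalIntegrable _ _)
    _ ≤ K * ((q - p) * ∫ x, |ψ x|) := by
        rw [intervalIntegral.integral_const_mul]
        exact mul_le_mul_of_nonneg_left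
          (hu.integral_mul_pdy_le hψ.abs habs (fun x => abs_nonneg _) a b) hK₀

lemma four_mul_integral_mul_energyDensity (hF : ContDiff ℝ 1 F) (hu : IsMonotoneFront F c p q u)
    (hφ : ContDiff ℝ 2 φ) (hφs : HasCompactSupport φ) (σ y : ℝ) :
    4 * ∫ x, φ x * energyDensity F u x y =
      (∫ x, φ x * pdyy (fun x y => (u x y - σ) ^ 2) x y) +
        c * (∫ x, φ x * pdy (fun x y => (u x y - σ) ^ 2) x y) +
      ((∫ x, deriv (deriv φ) x * (u x y - σ) ^ 2) +
        ∫ x, φ x * (4 * F (u x y) - 2 * (u x y - σ) * deriv F (u x y))) := by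
  have hw : ContDiff ℝ 2 ↿fun x y => (u x y - σ) ^ 2 :=
    (hu.contDiff_two.sub contDiff_const).pow 2
  have hL := integral_mul_driftLaplacian (c := c) hφ hφs hw y
  have hLc := continuous_driftLaplacian (c := c) hw
  have huc : Continuous ↿u := hu.contDiff.continuous
  have hFc : Continuous F := hF.continuous
  have : Continuous (deriv F) := hF.continuous_deriv le_rfl
  calc 4 * ∫ x, φ x * energyDensity F u x y
      = ∫ x, (φ x * driftLaplacian c (fun x y => (u x y - σ) ^ 2) x y +
          φ x * (4 * F (u x y) - 2 * (u x y - σ) * deriv F (u x y))) := by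
        rw [← integral_const_mul]
        simp only [mul_left_comm (4 : ℝ), hu.four_mul_energyDensity σ, mul_add]
    _ = _ := by
        rw [integral_add (integrable_mul_of_hasCompactSupport hφ.continuous hφs (by fun_prop))
          (integrable_mul_of_hasCompactSupport hφ.continuous hφs (by fun_prop)), hL]
        ring

lemma tendsto_integral_deriv_deriv_mul_sq_add {l : Filter ℝ} [l.IsCountablyGenerated]
    (hF : ContDiff ℝ 1 F) (hu : IsMonotoneFront F c p q u) (hσ : F σ = 0)
    (hlim : ∀ x, Tendsto (fun y => u x y) l (nhds σ)) (hφ : ContDiff ℝ 2 φ)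
    (hφs : HasCompactSupport φ) :
    Tendsto (fun y => (∫ x, deriv (deriv φ) x * (u x y - σ) ^ 2) +
      ∫ x, φ x * (4 * F (u x y) - 2 * (u x y - σ) * deriv F (u x y))) l (nhds 0) := by
  have : Continuous (deriv F) := hF.continuous_deriv le_rfl
  have hφ'' : Continuous (deriv (deriv φ)) :=
    (ContDiff.deriv' (n := 1) hφ).continuous_deriv le_rfl
  have hsq := tendsto_integral_mul_comp hφ'' hφs.deriv.deriv (G := fun s => (s - σ) ^ 2)
    (by fun_prop) hu.contDiff.continuous hu.mem_Icc hlim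
  have hpotential := tendsto_integral_mul_comp hφ.continuous hφs
    (G := fun s => 4 * F s - 2 * (s - σ) * deriv F s)
    ((hF.continuous.const_mul 4).sub (by fun_prop)) hu.contDiff.continuous hu.mem_Icc hlim
  simpa [hσ] using hsq.add hpotential

lemma frequently_integral_mul_energyDensity_lt_one {l : Filter ℝ} (hl : l = atBot ∨ l = atTop)
    (hF : ContDiff ℝ 1 F) (hu : IsMonotoneFront F c p q u) (hσ : F σ = 0)
    (hlim : ∀ x, Tendsto (fun y => u x y) l (nhds σ)) (hφ : ContDiff ℝ 2 φ)
    (hφs : HasCompactSupport φ) : ∃ᶠ y in l, ∫ x, φ x * energyDensity F u x y < 1 := by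
  have : l.IsCountablyGenerated := by rcases hl with rfl | rfl <;> infer_instance
  have hw : ContDiff ℝ 2 ↿fun x y => (u x y - σ) ^ 2 :=
    (hu.contDiff_two.sub contDiff_const).pow 2
  obtain ⟨C, hC⟩ := hu.exists_abs_comp_le (g := fun s => (s - σ) ^ 2) (by fun_prop)
  have hW := hasDerivAt_integral_mul hφ.continuous hφs (hw.of_le one_le_two)
  have hW' := hasDerivAt_integral_mul hφ.continuous hφs
    (contDiff_pdy hw one_add_one_eq_two.le)
  have hB (y : ℝ) : |∫ x, φ x * (u x y - σ) ^ 2| ≤ ∫ x, |φ x| * C := by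
    rw [← norm_eq_abs]
    refine norm_integral_le_of_norm_le (integrable_mul_of_hasCompactSupport hφ.continuous.abs
      hφs.norm continuous_const) (.of_forall fun x => ?_)
    rw [norm_mul]
    exact mul_le_mul_of_nonneg_left (hC x y) (abs_nonneg _)
  have hfreq : ∃ᶠ y in l, (∫ x, φ x * pdyy (fun x y => (u x y - σ) ^ 2) x y) +
      c * (∫ x, φ x * pdy (fun x y => (u x y - σ) ^ 2) x y) < 2 := by
    rcases hl with rfl | rfl
    · exact frequently_atBot_lt_of_bounded hW hW' hB two_pos
    · exact frequently_atTop_lt_of_bounded hW hW' hB two_pos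
  have hrest := hu.tendsto_integral_deriv_deriv_mul_sq_add hF hσ hlim hφ hφs
  refine (hfreq.and_eventually (hrest.eventually_lt_const two_pos)).mono fun y hy => ?_
  linarith [hu.four_mul_integral_mul_energyDensity hF hφ hφs σ y, hy.1, hy.2]

lemma abs_integral_mul_hamiltonianDensity_le_integral_mul_energyDensity
    (hF : IsBalancedPotential F p q) (hu : IsMonotoneFront F c p q u) (hφ : Continuous φ)
    (hφs : HasCompactSupport φ) (hφ₀ : ∀ x, 0 ≤ φ x) (y : ℝ) :
    |∫ x, φ x * hamiltonianDensity F u x y| ≤ ∫ x, φ x * energyDensity F u x y := by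
  have he := continuous_energyDensity hF.contDiff.continuous (hu.contDiff_two.of_le one_le_two)
  rw [← norm_eq_abs]
  refine norm_integral_le_of_norm_le (integrable_mul_of_hasCompactSupport hφ hφs (by fun_prop))
    (.of_forall fun x => ?_)
  rw [norm_mul, norm_of_nonneg (hφ₀ x)]
  exact mul_le_mul_of_nonneg_left (abs_hamiltonianDensity_le (hu.potential_nonneg hF x y)) (hφ₀ x)

lemma exists_le_and_abs_integral_mul_hamiltonianDensity_le_one (hF : IsBalancedPotential F p q)
    (hu : IsMonotoneFront F c p q u) (hφ : ContDiff ℝ 2 φ) (hφs : HasCompactSupport φ)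
    (hφ₀ : ∀ x, 0 ≤ φ x) (a : ℝ) : ∃ y ≤ a, |∫ x, φ x * hamiltonianDensity F u x y| ≤ 1 := by
  obtain ⟨y, hlt, hy⟩ := ((hu.frequently_integral_mul_energyDensity_lt_one (.inl rfl)
    (hF.contDiff.of_le one_le_two) hF.left_eq_zero hu.tendsto_atBot hφ hφs).and_eventually
    (eventually_le_atBot a)).exists
  exact ⟨y, hy, (hu.abs_integral_mul_hamiltonianDensity_le_integral_mul_energyDensity hF
    hφ.continuous hφs hφ₀ y).trans hlt.le⟩

lemma exists_ge_and_abs_integral_mul_hamiltonianDensity_le_one (hF : IsBalancedPotential F p q)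
    (hu : IsMonotoneFront F c p q u) (hφ : ContDiff ℝ 2 φ) (hφs : HasCompactSupport φ)
    (hφ₀ : ∀ x, 0 ≤ φ x) (b : ℝ) : ∃ y ≥ b, |∫ x, φ x * hamiltonianDensity F u x y| ≤ 1 := by
  obtain ⟨y, hlt, hy⟩ := ((hu.frequently_integral_mul_energyDensity_lt_one (.inr rfl)
    (hF.contDiff.of_le one_le_two) hF.right_eq_zero hu.tendsto_atTop hφ hφs).and_eventually
    (eventually_ge_atTop b)).exists
  exact ⟨y, hy, (hu.abs_integral_mul_hamiltonianDensity_le_integral_mul_energyDensity hF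
    hφ.continuous hφs hφ₀ y).trans hlt.le⟩

lemma abs_mul_integral_mul_sq_pdy_le (hF : IsBalancedPotential F p q)
    (hu : IsMonotoneFront F c p q u) (hK : ∀ x y, |pdx u x y| ≤ K) (hφ : ContDiff ℝ 2 φ)
    (hφs : HasCompactSupport φ) (hφ₀ : ∀ x, 0 ≤ φ x) (hab : a ≤ b) :
    |c| * ∫ y in a..b, ∫ x, φ x * pdy u x y ^ 2 ≤ 2 + K * ((q - p) * ∫ x, |deriv φ x|) := by
  have hφ₁ : ContDiff ℝ 1 φ := hφ.of_le one_le_two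
  obtain ⟨a', ha, ha'⟩ :=
    hu.exists_le_and_abs_integral_mul_hamiltonianDensity_le_one hF hφ hφs hφ₀ a
  obtain ⟨b', hb, hb'⟩ :=
    hu.exists_ge_and_abs_integral_mul_hamiltonianDensity_le_one hF hφ hφs hφ₀ b
  have hdiss := hu.continuous_integral_mul_sq_pdy hφ.continuous hφs
  have hdiss₀ (y : ℝ) : 0 ≤ ∫ x, φ x * pdy u x y ^ 2 :=
    integral_nonneg fun x => mul_nonneg (hφ₀ x) (sq_nonneg _)
  have hmono : ∫ y in a..b, ∫ x, φ x * pdy u x y ^ 2 ≤ ∫ y in a'..b', ∫ x, φ x * pdy u x y ^ 2 :=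
    intervalIntegral.integral_mono_interval ha hab hb (.of_forall hdiss₀)
      (hdiss.intervalIntegrable _ _)
  have hflux := hu.abs_integral_mul_flux_le hK (hφ₁.continuous_deriv le_rfl) hφs.deriv
    (ha.trans (hab.trans hb))
  have hsub := hu.integral_mul_hamiltonianDensity_sub (hF.contDiff.of_le one_le_two) hφ₁ hφs a' b'
  calc |c| * ∫ y in a..b, ∫ x, φ x * pdy u x y ^ 2
      ≤ |c| * ∫ y in a'..b', ∫ x, φ x * pdy u x y ^ 2 := by gcongr
    _ = |c * ∫ y in a'..b', ∫ x, φ x * pdy u x y ^ 2| := by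
        rw [abs_mul, abs_of_nonneg (a := ∫ y in a'..b', _)
          (intervalIntegral.integral_nonneg (ha.trans (hab.trans hb)) fun y _ => hdiss₀ y)]
    _ ≤ 2 + K * ((q - p) * ∫ x, |deriv φ x|) := by
        rw [abs_le] at *
        constructor <;> linarith

lemma abs_integral_mul_hamiltonianDensity_le (hF : IsBalancedPotential F p q)
    (hu : IsMonotoneFront F c p q u) (hK : ∀ x y, |pdx u x y| ≤ K) (hφ : ContDiff ℝ 2 φ)
    (hφs : HasCompactSupport φ) (hφ₀ : ∀ x, 0 ≤ φ x) (y : ℝ) :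
    |∫ x, φ x * hamiltonianDensity F u x y| ≤ 3 + 2 * (K * ((q - p) * ∫ x, |deriv φ x|)) := by
  have hφ₁ : ContDiff ℝ 1 φ := hφ.of_le one_le_two
  obtain ⟨b, hb, hb'⟩ :=
    hu.exists_ge_and_abs_integral_mul_hamiltonianDensity_le_one hF hφ hφs hφ₀ y
  have hdiss := hu.abs_mul_integral_mul_sq_pdy_le hF hK hφ hφs hφ₀ hb
  have hdiss₀ : 0 ≤ ∫ y in y..b, ∫ x, φ x * pdy u x y ^ 2 :=
    intervalIntegral.integral_nonneg hb
      fun y _ => integral_nonneg fun x => mul_nonneg (hφ₀ x) (sq_nonneg _)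
  have hflux := hu.abs_integral_mul_flux_le hK (hφ₁.continuous_deriv le_rfl) hφs.deriv hb
  have hsub := hu.integral_mul_hamiltonianDensity_sub (hF.contDiff.of_le one_le_two) hφ₁ hφs y b
  rw [← abs_of_nonneg hdiss₀, ← abs_mul] at hdiss
  rw [abs_le] at *
  constructor <;> linarith

lemma neg_le_driftLaplacian_sq_pdy (hF : ContDiff ℝ 2 F) (hu : IsMonotoneFront F c p q u)
    (hM : ∀ x y, |deriv (deriv F) (u x y)| ≤ M) (x y : ℝ) :
    -(2 * M * pdy u x y ^ 2) ≤ driftLaplacian c (fun x y => pdy u x y ^ 2) x y := by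
  rw [driftLaplacian_sq hu.contDiff_two_pdy, hu.linearized_equation hF]
  have hlow : -M ≤ deriv (deriv F) (u x y) := (abs_le.1 (hM x y)).1
  nlinarith [mul_le_mul_of_nonneg_right hlow (sq_nonneg (pdy u x y)),
    sq_nonneg (pdx (pdy u) x y), sq_nonneg (pdy (pdy u) x y)]

lemma neg_le_cutoff_mul_driftLaplacian_sub (hF : ContDiff ℝ 2 F) (hu : IsMonotoneFront F c p q u)
    (hM : ∀ x y, |deriv (deriv F) (u x y)| ≤ M)
    (hC : ∀ x, |deriv (deriv (cutoff S)) x| ≤ C * cutoff (2 * S) x) (hS : 0 < S) (x y : ℝ) :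
    -((2 * M + C) * (cutoff (2 * S) x * pdy u x y ^ 2)) ≤
      cutoff S x * driftLaplacian c (fun x y => pdy u x y ^ 2) x y -
        deriv (deriv (cutoff S)) x * pdy u x y ^ 2 := by
  have hM₀ : 0 ≤ M := (abs_nonneg _).trans (hM 0 0)
  have hLaplacian : -(2 * M * (cutoff (2 * S) x * pdy u x y ^ 2)) ≤
      cutoff S x * driftLaplacian c (fun x y => pdy u x y ^ 2) x y :=
    calc -(2 * M * (cutoff (2 * S) x * pdy u x y ^ 2))
        ≤ -(2 * M * (cutoff S x * pdy u x y ^ 2)) := by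
          gcongr
          exact cutoff_le_cutoff_two_mul hS x
      _ = cutoff S x * -(2 * M * pdy u x y ^ 2) := by ring
      _ ≤ _ := mul_le_mul_of_nonneg_left (hu.neg_le_driftLaplacian_sq_pdy hF hM x y)
          (cutoff_nonneg S x)
  have hcutoff : deriv (deriv (cutoff S)) x * pdy u x y ^ 2 ≤
      C * cutoff (2 * S) x * pdy u x y ^ 2 :=
    mul_le_mul_of_nonneg_right ((le_abs_self _).trans (hC x)) (sq_nonneg _)
  linarith

lemma neg_le_deriv_integral_cutoff_mul_sq_pdy (hF : ContDiff ℝ 2 F)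
    (hu : IsMonotoneFront F c p q u) (hM : ∀ x y, |deriv (deriv F) (u x y)| ≤ M)
    (hC : ∀ x, |deriv (deriv (cutoff S)) x| ≤ C * cutoff (2 * S) x) (hS : 0 < S) (y : ℝ) :
    -((2 * M + C) * ∫ x, cutoff (2 * S) x * pdy u x y ^ 2) ≤
      (∫ x, cutoff S x * pdyy (fun x y => pdy u x y ^ 2) x y) +
        c * ∫ x, cutoff S x * pdy (fun x y => pdy u x y ^ 2) x y := by
  have huy : Continuous ↿(pdy u) := hu.contDiff_two_pdy.continuous
  have hv : ContDiff ℝ 2 ↿fun x y => pdy u x y ^ 2 := hu.contDiff_two_pdy.pow 2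
  have hL : Continuous ↿(driftLaplacian c fun x y => pdy u x y ^ 2) :=
    continuous_driftLaplacian hv
  have hφ : ContDiff ℝ 2 (cutoff S) := contDiff_cutoff S
  have hφs : HasCompactSupport (cutoff S) := hasCompactSupport_cutoff hS.ne'
  have hφ'' : Continuous (deriv (deriv (cutoff S))) :=
    (ContDiff.deriv' (n := 1) hφ).continuous_deriv le_rfl
  have hLi : Integrable fun x => cutoff S x * driftLaplacian c (fun x y => pdy u x y ^ 2) x y :=
    integrable_mul_of_hasCompactSupport (continuous_cutoff S) hφs (by fun_prop)
  have hφi : Integrable fun x => deriv (deriv (cutoff S)) x * pdy u x y ^ 2 :=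
    integrable_mul_of_hasCompactSupport hφ'' hφs.deriv.deriv (by fun_prop)
  have hvi : Integrable fun x => cutoff (2 * S) x * pdy u x y ^ 2 :=
    integrable_mul_of_hasCompactSupport (continuous_cutoff (2 * S))
      (hasCompactSupport_cutoff (by positivity)) (by fun_prop)
  have hle := integral_mono (hvi.const_mul (2 * M + C)).neg (hLi.sub hφi) fun x =>
    hu.neg_le_cutoff_mul_driftLaplacian_sub hF hM hC hS x y
  simp only [Pi.neg_apply, Pi.sub_apply] at hle
  rw [integral_neg, integral_const_mul, integral_sub hLi hφi,
    integral_mul_driftLaplacian hφ hφs hv] at hle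
  linarith

/-- `uᵧ²` is a subsolution of the linearized equation up to a zeroth order term, so its averages in
`y` control its values. -/
lemma exists_integral_cutoff_mul_sq_pdy_le (hF : ContDiff ℝ 2 F) (hu : IsMonotoneFront F c p q u)
    (hA : ∀ S > 0, ∀ a b, a ≤ b → ∫ y in a..b, ∫ x, cutoff S x * pdy u x y ^ 2 ≤ A) :
    ∃ D, ∀ S ≥ 1, ∀ y, ∫ x, cutoff S x * pdy u x y ^ 2 ≤ D := by
  obtain ⟨M, hM⟩ := hu.exists_abs_comp_le
    ((ContDiff.deriv' (n := 1) hF).continuous_deriv le_rfl)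
  obtain ⟨C, hC₀, hC⟩ := exists_abs_deriv_deriv_cutoff_le
  have hM₀ : 0 ≤ M := (abs_nonneg _).trans (hM 0 0)
  have hv : ContDiff ℝ 2 ↿fun x y => pdy u x y ^ 2 := hu.contDiff_two_pdy.pow 2
  refine ⟨2 * (A + |c| * A) + (2 * M + C) * A, fun S hS => ?_⟩
  have hS₀ : 0 < S := one_pos.trans_le hS
  have hφs : HasCompactSupport (cutoff S) := hasCompactSupport_cutoff hS₀.ne'
  refine le_of_integral_le_of_neg_le
    (hasDerivAt_integral_mul (continuous_cutoff S) hφs (hv.of_le one_le_two))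
    (hasDerivAt_integral_mul (continuous_cutoff S) hφs (contDiff_pdy hv one_add_one_eq_two.le))
    (fun y => integral_nonneg fun x => mul_nonneg (cutoff_nonneg S x) (sq_nonneg _))
    (hA S hS₀) ((hu.continuous_integral_mul_sq_pdy (continuous_cutoff (2 * S))
      (hasCompactSupport_cutoff (by positivity))).const_mul (2 * M + C)) (fun a b hab => ?_)
    (hu.neg_le_deriv_integral_cutoff_mul_sq_pdy hF hM (hC S hS) hS₀)
  rw [intervalIntegral.integral_const_mul]
  exact mul_le_mul_of_nonneg_left (hA (2 * S) (by positivity) a b hab) (by positivity)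

lemma exists_integral_cutoff_mul_energyDensity_le (hF : IsBalancedPotential F p q) (hc : c ≠ 0)
    (hu : IsMonotoneFront F c p q u) :
    ∃ E, ∀ S ≥ 1, ∀ y, ∫ x, cutoff S x * energyDensity F u x y ≤ E := by
  obtain ⟨K, hK⟩ := hu.exists_abs_pdx_le (hF.contDiff.of_le one_le_two)
  have hdiss (S : ℝ) (hS : S > 0) (a b : ℝ) (hab : a ≤ b) :
      ∫ y in a..b, ∫ x, cutoff S x * pdy u x y ^ 2 ≤
        (2 + K * ((q - p) * ∫ x, |deriv (cutoff 1) x|)) / |c| := by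
    rw [le_div_iff₀' (abs_pos.2 hc), ← integral_abs_deriv_cutoff hS]
    exact hu.abs_mul_integral_mul_sq_pdy_le hF hK (contDiff_cutoff S)
      (hasCompactSupport_cutoff hS.ne') (cutoff_nonneg S) hab
  obtain ⟨D, hD⟩ := hu.exists_integral_cutoff_mul_sq_pdy_le hF.contDiff hdiss
  refine ⟨3 + 2 * (K * ((q - p) * ∫ x, |deriv (cutoff 1) x|)) + D, fun S hS y => ?_⟩
  have hS₀ : 0 < S := one_pos.trans_le hS
  have hφs : HasCompactSupport (cutoff S) := hasCompactSupport_cutoff hS₀.ne'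
  have hhc := (contDiff_hamiltonianDensity (hF.contDiff.of_le one_le_two)
    hu.contDiff_two).continuous
  have huy : Continuous ↿(pdy u) := hu.contDiff_two_pdy.continuous
  have hh := hu.abs_integral_mul_hamiltonianDensity_le hF hK (contDiff_cutoff S) hφs
    (cutoff_nonneg S) y
  rw [integral_abs_deriv_cutoff hS₀] at hh
  simp only [energyDensity_eq_add, mul_add]
  rw [integral_add (integrable_mul_of_hasCompactSupport (continuous_cutoff S) hφs (by fun_prop))
    (integrable_mul_of_hasCompactSupport (continuous_cutoff S) hφs (by fun_prop))]
  exact add_le_add ((le_abs_self _).trans hh) (hD S hS y)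

lemma exists_integral_energyDensity_le (hF : IsBalancedPotential F p q) (hc : c ≠ 0)
    (hu : IsMonotoneFront F c p q u) :
    ∃ E, ∀ y, Integrable (fun x => energyDensity F u x y) ∧ ∫ x, energyDensity F u x y ≤ E := by
  obtain ⟨E, hE⟩ := hu.exists_integral_cutoff_mul_energyDensity_le hF hc
  have he := continuous_energyDensity hF.contDiff.continuous (hu.contDiff_two.of_le one_le_two)
  refine ⟨E, fun y => ?_⟩
  have hint : Integrable fun x => energyDensity F u x y :=
    integrable_of_integral_cutoff_mul_le (by fun_prop)
      (fun x => energyDensity_nonneg (hu.potential_nonneg hF x y)) fun S hS => hE S hS y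
  refine ⟨hint, le_of_tendsto (tendsto_integral_cutoff_mul hint) ?_⟩
  filter_upwards [eventually_ge_atTop 1] with S hS using hE S hS y

lemma integrable_hamiltonianDensity (hF : IsBalancedPotential F p q)
    (hu : IsMonotoneFront F c p q u) {y : ℝ} (he : Integrable fun x => energyDensity F u x y) :
    Integrable fun x => hamiltonianDensity F u x y := by
  have hh := (contDiff_hamiltonianDensity (hF.contDiff.of_le one_le_two)
    hu.contDiff_two).continuous
  exact he.mono' (Continuous.aestronglyMeasurable (by fun_prop))
    (.of_forall fun x => abs_hamiltonianDensity_le (hu.potential_nonneg hF x y))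

lemma integrable_sq_pdy (hF : IsBalancedPotential F p q) (hu : IsMonotoneFront F c p q u) {y : ℝ}
    (he : Integrable fun x => energyDensity F u x y) : Integrable fun x => pdy u x y ^ 2 := by
  have huy : Continuous ↿(pdy u) := hu.contDiff_two_pdy.continuous
  refine (he.const_mul 2).mono' (Continuous.aestronglyMeasurable (by fun_prop))
    (.of_forall fun x => ?_)
  rw [norm_of_nonneg (sq_nonneg _)]
  exact sq_pdy_le (hu.potential_nonneg hF x y)

lemma tendsto_integral_cutoff_mul_sq_pdy (hF : IsBalancedPotential F p q)
    (hu : IsMonotoneFront F c p q u) (he : ∀ y, Integrable fun x => energyDensity F u x y)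
    (hE : ∀ y, ∫ x, energyDensity F u x y ≤ E) (a b : ℝ) :
    Tendsto (fun S => ∫ y in a..b, ∫ x, cutoff S x * pdy u x y ^ 2) atTop
      (nhds (∫ y in a..b, ∫ x, pdy u x y ^ 2)) := by
  refine intervalIntegral.tendsto_integral_filter_of_dominated_convergence (fun _ => 2 * E) ?_ ?_
    intervalIntegrable_const (.of_forall fun y _ =>
      tendsto_integral_cutoff_mul (hu.integrable_sq_pdy hF (he y)))
  · filter_upwards [eventually_gt_atTop 0] with S hS
    exact (hu.continuous_integral_mul_sq_pdy (continuous_cutoff S)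
      (hasCompactSupport_cutoff hS.ne')).aestronglyMeasurable
  · refine .of_forall fun S => .of_forall fun y _ => ?_
    refine (norm_integral_le_of_norm_le ((he y).const_mul 2) (.of_forall fun x => ?_)).trans ?_
    · rw [norm_of_nonneg (mul_nonneg (cutoff_nonneg S x) (sq_nonneg _))]
      exact (mul_le_of_le_one_left (sq_nonneg _) (cutoff_le_one S x)).trans
        (sq_pdy_le (hu.potential_nonneg hF x y))
    · rw [integral_const_mul]
      linarith [hE y]

lemma tendsto_integral_deriv_cutoff_mul_flux (hF : IsBalancedPotential F p q)
    (hu : IsMonotoneFront F c p q u) (he : ∀ y, Integrable fun x => energyDensity F u x y)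
    (hE : ∀ y, ∫ x, energyDensity F u x y ≤ E) (a b : ℝ) :
    Tendsto (fun S => ∫ y in a..b, ∫ x, deriv (cutoff S) x * (pdx u x y * pdy u x y)) atTop
      (nhds 0) := by
  obtain ⟨C, hC⟩ := exists_abs_deriv_cutoff_le
  have hC₀ : 0 ≤ C := by simpa using (abs_nonneg _).trans (hC 1 one_pos 0)
  have hbound (S : ℝ) (hS : 0 < S) (y : ℝ) :
      ‖∫ x, deriv (cutoff S) x * (pdx u x y * pdy u x y)‖ ≤ C / S * E := by
    refine (norm_integral_le_of_norm_le ((he y).const_mul (C / S)) (.of_forall fun x => ?_)).trans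
      ?_
    · rw [norm_mul]
      exact mul_le_mul (hC S hS x) (abs_pdx_mul_pdy_le (hu.potential_nonneg hF x y))
        (abs_nonneg _) (by positivity)
    · rw [integral_const_mul]
      exact mul_le_mul_of_nonneg_left (hE y) (by positivity)
  have hlim : Tendsto (fun S => C / S * E * |b - a|) atTop (nhds 0) := by
    simpa using (((tendsto_const_nhds (x := C)).div_atTop tendsto_id).mul_const E).mul_const
      |b - a|
  refine squeeze_zero_norm' ?_ hlim
  filter_upwards [eventually_gt_atTop 0] with S hS
  exact intervalIntegral.norm_integral_le_of_norm_le_const fun y _ => hbound S hS y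

end IsMonotoneFront

lemma BalancedDoubleWell.isBalancedPotential {F : ℝ → ℝ} (hF : BalancedDoubleWell F) :
    IsBalancedPotential F (-1) 1 := by
  obtain ⟨hF₃, -, -, -, -, hpos, hneg, hleft, hright⟩ := hF
  refine ⟨hF₃.of_le (by norm_num), fun s hs => ?_, hleft, hright⟩
  rcases le_total s 0 with hs₀ | hs₀
  · have hmono : MonotoneOn F (Set.Icc (-1) 0) :=
      monotoneOn_of_deriv_nonneg (convex_Icc _ _) hF₃.continuous.continuousOn
        (hF₃.differentiable three_ne_zero).differentiableOn fun t ht => by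
          rw [interior_Icc] at ht
          exact (hpos t ht).le
    exact hleft.ge.trans (hmono ⟨le_rfl, by norm_num⟩ ⟨hs.1, hs₀⟩ hs.1)
  · have hanti : AntitoneOn F (Set.Icc 0 1) :=
      antitoneOn_of_deriv_nonpos (convex_Icc _ _) hF₃.continuous.continuousOn
        (hF₃.differentiable three_ne_zero).differentiableOn fun t ht => by
          rw [interior_Icc] at ht
          exact (hneg t ht).le
    exact hright.ge.trans (hanti ⟨hs₀, hs.2⟩ ⟨zero_le_one, le_rfl⟩ hs.2)

lemma IsTravelingWave.isMonotoneFront {F : ℝ → ℝ} {c : ℝ} {u : ℝ → ℝ → ℝ}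
    (hu : IsTravelingWave F c u) : IsMonotoneFront F c (-1) 1 u :=
  let ⟨⟨hcont, heq, _, hpos⟩, htop, hbot⟩ := hu
  ⟨hcont, heq, fun x y => (hpos x y).le, hbot, htop⟩

theorem hamiltonian_identity_general {F : ℝ → ℝ} {c p q : ℝ} {u : ℝ → ℝ → ℝ}
    (hF : IsBalancedPotential F p q) (hc : c ≠ 0) (hu : IsMonotoneFront F c p q u) :
    (∀ y, Integrable fun x => hamiltonianDensity F u x y) ∧
    ∀ y₀ y, (∫ x, hamiltonianDensity F u x y) - (∫ x, hamiltonianDensity F u x y₀) =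
      c * ∫ t in y₀..y, ∫ x, pdy u x t ^ 2 := by
  obtain ⟨E, hE⟩ := hu.exists_integral_energyDensity_le hF hc
  obtain ⟨he, hE⟩ := forall_and.1 hE
  have hint (y : ℝ) := hu.integrable_hamiltonianDensity hF (he y)
  refine ⟨hint, fun y₀ y => ?_⟩
  have hleft := (tendsto_integral_cutoff_mul (hint y)).sub (tendsto_integral_cutoff_mul (hint y₀))
  have hdiss := hu.tendsto_integral_cutoff_mul_sq_pdy hF he hE y₀ y
  have hflux := hu.tendsto_integral_deriv_cutoff_mul_flux hF he hE y₀ y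
  have hright := (hdiss.const_mul c).sub hflux
  rw [sub_zero] at hright
  refine tendsto_nhds_unique (hleft.congr' ?_) hright
  filter_upwards [eventually_gt_atTop 0] with S hS
  exact hu.integral_mul_hamiltonianDensity_sub (hF.contDiff.of_le one_le_two) (contDiff_cutoff S)
    (hasCompactSupport_cutoff hS.ne') y₀ y

/-- The Hamiltonian identity for traveling wave solutions (Lemma 2.5):
`ρ(y) - ρ(y₀) = c ∫_{y₀}^{y} ∫_ℝ uᵧ² dx dt` where
`ρ(y) = ∫_ℝ [ ½(uₓ² - uᵧ²) + F(u) ] dx`. -/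
theorem hamiltonian_identity
    (F : ℝ → ℝ) (hF : BalancedDoubleWell F) (c : ℝ) (hc : 0 < c)
    (u : ℝ → ℝ → ℝ) (hu : IsTravelingWave F c u) :
    (∀ y : ℝ, Integrable (fun x =>
      (1 / 2) * ((pdx u x y) ^ 2 - (pdy u x y) ^ 2) + F (u x y))) ∧
    (∀ y₀ y : ℝ,
      (∫ x, ((1 / 2) * ((pdx u x y) ^ 2 - (pdy u x y) ^ 2) + F (u x y))) -
        (∫ x, ((1 / 2) * ((pdx u x y₀) ^ 2 - (pdy u x y₀) ^ 2) + F (u x y₀))) =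
      c * ∫ t in y₀..y, ∫ x, (pdy u x t) ^ 2) :=
  hamiltonian_identity_general hF.isBalancedPotential hc.ne' hu.isMonotoneFront
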